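/- arXiv:2505.08169 — 3 statements merged into one kernel-verified Lean document; each statement's English description precedes it below -/
import Mathlib

section
/- Let K ⊂ R^n, n ≥ 3, be a strictly convex body and let S be a topological sphere (embedded image of S^{n−1}) containing K in its interior. Suppose that for every x ∈ S there exists y ∈ S such that the support cones S(K,x) and S(K,y) differ by a central symmetry (i.e., there is a point c with S(K,y) = 2c − S(K,x)). Then K and S are centrally symmetric with a common center. -/
open Set Metric Function Bornology
open scoped RealInnerProductSpace Pointwise

noncomputable section

/-- The cone generated by `K` with apex `x`: `{x + t • (w - x) : w ∈ K, t ≥ 0}`. -/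
def cone {n : ℕ} (K : Set (EuclideanSpace ℝ (Fin n))) (x : EuclideanSpace ℝ (Fin n)) :
    Set (EuclideanSpace ℝ (Fin n)) :=
  {p | ∃ w ∈ K, ∃ t : ℝ, 0 ≤ t ∧ p = x + t • (w - x)}

/-- The support cone `S(K,x)`: the boundary of the cone generated by `K` with apex `x`. -/
def supportCone {n : ℕ} (K : Set (EuclideanSpace ℝ (Fin n))) (x : EuclideanSpace ℝ (Fin n)) :
    Set (EuclideanSpace ℝ (Fin n)) :=
  frontier (cone K x)

/-- A convex body: compact, convex, with nonempty interior. -/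
def IsConvexBody {n : ℕ} (K : Set (EuclideanSpace ℝ (Fin n))) : Prop :=
  IsCompact K ∧ Convex ℝ K ∧ (interior K).Nonempty

/-- An ellipsoid: a nondegenerate affine image of the closed unit ball. -/
def IsEllipsoid {n : ℕ} (K : Set (EuclideanSpace ℝ (Fin n))) : Prop :=
  ∃ f : EuclideanSpace ℝ (Fin n) ≃ᵃ[ℝ] EuclideanSpace ℝ (Fin n), K = f '' closedBall 0 1

/-- `K` has the strong intersection property relative to `O` and `S` with associated body `G`. -/
def StrongIntersectionProperty {n : ℕ} (O : EuclideanSpace ℝ (Fin n))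
    (K S G : Set (EuclideanSpace ℝ (Fin n))) : Prop :=
  ∀ x ∈ frontier S, ∃ y ∈ frontier S, x ≠ y ∧ Collinear ℝ {x, O, y} ∧
    ∃ u : EuclideanSpace ℝ (Fin n), u ≠ 0 ∧
      supportCone K x ∩ supportCone K y = {p | ⟪u, p - O⟫ = 0} ∩ G

/-
Write `h` for the support function of `K` on the dual space. If the support cones at `x` and `y`
are centrally symmetric, then `u y = -h (-u)` for every functional `u` with `u x = h u`. Lagrange
multipliers on `{u | h u = u x}` turn this into `y = p' + l • (x - p)`, where `p` and `p'` are the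
points of `K` at which `u` and `-u` attain their maxima. The coefficient `l` is the same for all
`x ∈ S` in one supporting hyperplane of `K`, so on each such section of `S` the map `x ↦ y` has the
form `x ↦ l • x + b`. Two neighbouring supporting hyperplanes meet close to `K`, hence in two
distinct points of `S`, which forces equal `l` and `b`; since the nonzero functionals form a
connected set, `l` and `b` are global. Evaluating `-h (-u) = l * h u + u b` at `u` and `-u` gives
`l = -1`. So `x ↦ b - x` preserves `S`, and `h u - h (-u) = u b` says that it preserves `K`.
-/

open Filter Module Topology

section LinearAlgebra

variable {𝕜 V ι : Type*} [Field 𝕜] [AddCommGroup V] [Module 𝕜 V]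

lemma exists_ne_zero_forall_dual_eq_zero [Fintype ι] (hV : Fintype.card ι < finrank 𝕜 V)
    (φ : ι → Dual 𝕜 V) : ∃ v ≠ 0, ∀ i, φ i v = 0 := by
  have : FiniteDimensional 𝕜 V := .of_finrank_pos (by omega)
  have hker : (LinearMap.pi φ).ker ≠ ⊥ := LinearMap.ker_ne_bot_of_finrank_lt (by simpa)
  obtain ⟨v, hv, hv₀⟩ := Submodule.exists_mem_ne_zero_of_ne_bot hker
  exact ⟨v, hv₀, congrFun hv⟩

lemma exists_notMem_span_range [Fintype ι] (hV : Fintype.card ι < finrank 𝕜 V) (b : ι → V) :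
    ∃ v, v ∉ Submodule.span 𝕜 (range b) := by
  by_contra! hall
  have hle := finrank_range_le_card (R := 𝕜) b
  rw [Set.finrank, Submodule.eq_top_iff'.2 hall, finrank_top] at hle
  omega

lemma linearIndependent_pair_of_dual {f : Dual 𝕜 V} {a b : V} (hfa : f a ≠ 0) (hfb : f b = 0)
    (hb : b ≠ 0) : LinearIndependent 𝕜 ![a, b] := by
  refine LinearIndependent.pair_iff.2 fun s t hst ↦ ?_
  have hs : s = 0 := by simpa [hfa, hfb] using congrArg f hst
  exact ⟨hs, by simpa [hs, hb] using hst⟩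

end LinearAlgebra

lemma exists_strongDual_ne_zero_of_notMem {𝕜 E : Type*} [NontriviallyNormedField 𝕜]
    [CompleteSpace 𝕜] [AddCommGroup E] [Module 𝕜 E] [TopologicalSpace E] [IsTopologicalAddGroup E]
    [ContinuousSMul 𝕜 E] [T2Space E] [FiniteDimensional 𝕜 E] {p : Submodule 𝕜 E} {v : E}
    (hv : v ∉ p) : ∃ f : StrongDual 𝕜 E, f v ≠ 0 ∧ ∀ w ∈ p, f w = 0 := by
  obtain ⟨f, hfv, hf⟩ := p.exists_le_ker_of_notMem hv
  exact ⟨f.toContinuousLinearMap, hfv, fun w hw ↦ hf hw⟩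

lemma inter_frontier_nonempty_of_isPreconnected {X : Type*} [TopologicalSpace X] {s t : Set X}
    (ht : IsPreconnected t) (hts : (t ∩ s).Nonempty) (hts' : ¬t ⊆ s) :
    (t ∩ frontier s).Nonempty := by
  by_contra hempty
  have hmem : ∀ z ∈ t, z ∈ closure s → z ∈ interior s := fun z hzt hzs ↦
    by_contra fun hz ↦ hempty ⟨z, hzt, hzs, hz⟩
  obtain ⟨a, hat, has⟩ := hts
  have hsub : t ⊆ interior s := ht.subset_of_closure_inter_subset isOpen_interior
    ⟨a, hat, hmem a hat (subset_closure has)⟩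
    fun z hz ↦ hmem z hz.2 (closure_mono interior_subset hz.1)
  exact hts' (hsub.trans interior_subset)

section Rays

variable {E : Type*} [NormedAddCommGroup E] [NormedSpace ℝ E]

lemma exists_add_smul_notMem_of_isBounded {s : Set E} (hs : IsBounded s) (q : E) {d : E}
    (hd : d ≠ 0) : ∃ t : ℝ, 0 < t ∧ q + t • d ∉ s := by
  obtain ⟨r, hr⟩ := hs.subset_closedBall q
  have hd' : 0 < ‖d‖ := norm_pos_iff.2 hd
  refine ⟨(|r| + 1) / ‖d‖, by positivity, fun hmem ↦ ?_⟩
  have hle := hr hmem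
  rw [mem_closedBall, dist_self_add_left, norm_smul, Real.norm_of_nonneg (by positivity),
    div_mul_cancel₀ _ hd'.ne'] at hle
  linarith [le_abs_self r]

/-- Every half-line from `q` meets `S`: a weak form of `q` lying in a bounded component of the
complement of `S`. -/
def Encloses (S : Set E) (q : E) : Prop :=
  ∀ d : E, d ≠ 0 → ∃ t : ℝ, 0 < t ∧ q + t • d ∈ S

lemma encloses_of_isBounded_connectedComponentIn {S : Set E} {c q : E}
    (hbdd : IsBounded (connectedComponentIn Sᶜ c)) (hq : q ∈ connectedComponentIn Sᶜ c) :
    Encloses S q := by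
  intro d hd
  by_contra! hS
  obtain ⟨T, hT, hout⟩ := exists_add_smul_notMem_of_isBounded hbdd q hd
  have hqS : q ∉ S := connectedComponentIn_subset _ _ hq
  have hray : (fun t : ℝ ↦ q + t • d) '' Ici 0 ⊆ connectedComponentIn Sᶜ c := by
    rw [connectedComponentIn_eq hq]
    refine (isPreconnected_Ici.image _ (by fun_prop)).subset_connectedComponentIn
      ⟨0, self_mem_Ici, by simp⟩ ?_
    rintro _ ⟨t, ht, rfl⟩
    rcases (mem_Ici.1 ht).eq_or_lt with rfl | ht
    · simpa using hqS
    · exact hS t ht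
  exact hout (hray ⟨T, hT.le, rfl⟩)

lemma mem_convexHull_frontier {C : Set E} {p v : E} (hp : p ∈ C) {s t : ℝ} (hs : 0 < s)
    (ht : 0 < t) (hsv : p + s • v ∉ C) (htv : p + t • -v ∉ C) : p ∈ convexHull ℝ (frontier C) := by
  have hit : ∀ {r : ℝ} {w : E}, 0 < r → p + r • w ∉ C →
      ∃ a : ℝ, 0 ≤ a ∧ p + a • w ∈ frontier C := by
    intro r w hr hw
    have hconn : IsPreconnected ((fun a : ℝ ↦ p + a • w) '' Icc 0 r) :=
      isPreconnected_Icc.image _ (by fun_prop)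
    obtain ⟨_, ⟨a, ha, rfl⟩, hfr⟩ := inter_frontier_nonempty_of_isPreconnected hconn
      ⟨p, ⟨0, ⟨le_rfl, hr.le⟩, by simp⟩, hp⟩ fun hsub ↦ hw (hsub ⟨r, ⟨hr.le, le_rfl⟩, rfl⟩)
    exact ⟨a, ha.1, hfr⟩
  obtain ⟨a, ha, hav⟩ := hit hs hsv
  obtain ⟨b, hb, hbv⟩ := hit ht htv
  have hhull := subset_convexHull ℝ (frontier C)
  rcases ha.eq_or_lt with rfl | ha
  · exact hhull (by simpa using hav)
  · have hcomb := convex_convexHull ℝ (frontier C) (hhull hav) (hhull hbv)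
      (a := b / (a + b)) (b := a / (a + b)) (by positivity) (by positivity) (by field_simp; ring)
    convert hcomb using 1
    match_scalars <;> field_simp <;> ring

end Rays

section SupportFunction

variable {E : Type*} [NormedAddCommGroup E] [NormedSpace ℝ E]

/-- The support function `u ↦ max_{p ∈ K} u p` of `K`, taken on the dual space. It is meaningful
for nonempty compact `K`; a point `p ∈ K` with `u p = supportFunction K u` is a contact point of
`K` with its supporting hyperplane in direction `u`. -/
def supportFunction (K : Set E) (u : StrongDual ℝ E) : ℝ :=
  sSup (u '' K)

variable {K : Set E} {u v : StrongDual ℝ E} {p q : E}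

lemma apply_le_supportFunction (hK : IsCompact K) (u : StrongDual ℝ E) (hp : p ∈ K) :
    u p ≤ supportFunction K u :=
  le_csSup (hK.image u.continuous).bddAbove (mem_image_of_mem u hp)

lemma exists_apply_eq_supportFunction (hK : IsCompact K) (hne : K.Nonempty)
    (u : StrongDual ℝ E) : ∃ p ∈ K, u p = supportFunction K u := by
  obtain ⟨p, hp, hup⟩ := hK.exists_sSup_image_eq hne u.continuous.continuousOn
  exact ⟨p, hp, hup.symm⟩

lemma supportFunction_le (hne : K.Nonempty) {c : ℝ} (hc : ∀ p ∈ K, u p ≤ c) :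
    supportFunction K u ≤ c :=
  csSup_le (hne.image u) (forall_mem_image.2 hc)

lemma supportFunction_sub_le (hK : IsCompact K) (hp : p ∈ K) (hup : u p = supportFunction K u) :
    supportFunction K u - supportFunction K v ≤ (u - v) p := by
  have := apply_le_supportFunction hK v hp
  rw [sub_apply]
  linarith

lemma continuous_supportFunction (hK : IsCompact K) : Continuous (supportFunction K) :=
  hK.continuous_sSup (f := fun (u : StrongDual ℝ E) p ↦ u p) (by fun_prop)

lemma apply_lt_supportFunction_of_mem_interior (hK : IsCompact K) (hu : u ≠ 0)
    (hp : p ∈ interior K) : u p < supportFunction K u := by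
  refine (apply_le_supportFunction hK u (interior_subset hp)).lt_of_ne fun hup ↦ hu ?_
  have hmax : IsMaxOn u K p := fun q hq ↦ (apply_le_supportFunction hK u hq).trans_eq hup.symm
  exact (hmax.isLocalMax (mem_interior_iff_mem_nhds.1 hp)).hasFDerivAt_eq_zero u.hasFDerivAt

lemma eq_of_apply_eq_supportFunction (hK : IsCompact K) (hKs : StrictConvex ℝ K) (hu : u ≠ 0)
    (hp : p ∈ K) (hup : u p = supportFunction K u) (hq : q ∈ K)
    (huq : u q = supportFunction K u) : p = q := by
  refine hKs.eq hp hq one_half_pos one_half_pos (add_halves 1) fun hint ↦ ?_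
  have hlt := apply_lt_supportFunction_of_mem_interior hK hu hint
  rw [map_add, map_smul, map_smul, hup, huq, ← add_smul, add_halves, one_smul] at hlt
  exact hlt.false

lemma supportFunction_add_supportFunction_neg_pos (hK : IsCompact K) (hint : (interior K).Nonempty)
    (hu : u ≠ 0) : 0 < supportFunction K u + supportFunction K (-u) := by
  obtain ⟨p, hp⟩ := hint
  have hlt := apply_lt_supportFunction_of_mem_interior hK hu hp
  have hle := apply_le_supportFunction hK (-u) (interior_subset hp)
  rw [neg_apply] at hle
  linarith

lemma eventually_forall_apply_eq_supportFunction_imp_mem (hK : IsCompact K) {U : Set E}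
    (hU : IsOpen U) (hpU : ∀ p ∈ K, u p = supportFunction K u → p ∈ U) :
    ∀ᶠ v in 𝓝 u, ∀ p ∈ K, v p = supportFunction K v → p ∈ U := by
  have hcont := continuous_supportFunction hK
  have hlt : ∀ᶠ v in 𝓝 u, ∀ p ∈ K \ U, v p < supportFunction K v := by
    refine (hK.diff hU).eventually_forall_of_forall_eventually fun p hp ↦ ?_
    have hup : u p < supportFunction K u :=
      (apply_le_supportFunction hK u hp.1).lt_of_ne fun hup ↦ hp.2 (hpU p hp.1 hup)
    exact (by fun_prop : Continuous fun z : StrongDual ℝ E × E ↦ z.1 z.2).continuousAt.eventually_lt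
      (hcont.comp continuous_fst).continuousAt hup
  filter_upwards [hlt] with v hv p hp hvp
  exact by_contra fun hpU ↦ (hv p ⟨hp, hpU⟩).ne hvp

lemma hasStrictFDerivAt_supportFunction (hK : IsCompact K) (hp : p ∈ K)
    (huniq : ∀ q ∈ K, u q = supportFunction K u → q = p) :
    HasStrictFDerivAt (supportFunction K) (ContinuousLinearMap.apply ℝ ℝ p) u := by
  refine .of_isLittleO (Asymptotics.isLittleO_iff.2 fun ε hε ↦ ?_)
  have hnear : ∀ᶠ v in 𝓝 u, ∀ q ∈ K, v q = supportFunction K v → q ∈ ball p ε :=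
    eventually_forall_apply_eq_supportFunction_imp_mem hK isOpen_ball fun q hq huq ↦
      huniq q hq huq ▸ mem_ball_self hε
  have hle : ∀ {v w : StrongDual ℝ E}, (∀ q ∈ K, v q = supportFunction K v → q ∈ ball p ε) →
      supportFunction K v - supportFunction K w - (v - w) p ≤ ε * ‖v - w‖ := by
    intro v w hv
    obtain ⟨q, hq, hvq⟩ := exists_apply_eq_supportFunction hK ⟨p, hp⟩ v
    calc supportFunction K v - supportFunction K w - (v - w) p
        ≤ (v - w) (q - p) := by
          rw [map_sub]
          exact sub_le_sub_right (supportFunction_sub_le hK hq hvq) _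
      _ ≤ ‖v - w‖ * ‖q - p‖ := (le_abs_self _).trans ((v - w).le_opNorm _)
      _ ≤ ε * ‖v - w‖ := by
          rw [mul_comm]
          gcongr
          exact (mem_ball_iff_norm.1 (hv q hq hvq)).le
  filter_upwards [hnear.prod_nhds hnear] with ⟨v, w⟩ ⟨hv, hw⟩
  refine abs_le.2 ⟨?_, hle hv⟩
  have := hle (w := v) hw
  simp only [ContinuousLinearMap.apply_apply, sub_apply, norm_sub_rev w v]
    at this ⊢
  linarith

lemma hasStrictFDerivAt_supportFunction_neg (hK : IsCompact K) (hp : p ∈ K)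
    (huniq : ∀ q ∈ K, (-u) q = supportFunction K (-u) → q = p) :
    HasStrictFDerivAt (fun v ↦ supportFunction K (-v)) (-ContinuousLinearMap.apply ℝ ℝ p) u :=
  ((hasStrictFDerivAt_supportFunction hK hp huniq).comp u (hasStrictFDerivAt_id u).neg).congr_fderiv
    (by ext; simp)

end SupportFunction

section Tangents

variable {E : Type*} [NormedAddCommGroup E] [NormedSpace ℝ E] {K : Set E} {x r v : E}

lemma supportFunction_add_smul_le (hK : IsCompact K) (hne : K.Nonempty) (f e : StrongDual ℝ E)
    {ρ : ℝ} (hρ : 0 ≤ ρ) :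
    supportFunction K (f + ρ • e) ≤ supportFunction K f + ρ * supportFunction K e :=
  supportFunction_le hne fun _ hp ↦ add_le_add (apply_le_supportFunction hK f hp)
    (mul_le_mul_of_nonneg_left (apply_le_supportFunction hK e hp) hρ)

lemma exists_supportFunction_lt_of_line_notMem [FiniteDimensional ℝ E] (hK : IsCompact K)
    (hKc : Convex ℝ K) (hne : K.Nonempty) (hline : ∀ t : ℝ, x + t • r ∉ K) :
    ∃ e : StrongDual ℝ E, e r = 0 ∧ supportFunction K e < e x := by
  let L := AffineSubspace.mk' x (Submodule.span ℝ {r})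
  have hmem : ∀ t : ℝ, x + t • r ∈ L := fun t ↦ by
    simpa [L, AffineSubspace.mem_mk'] using
      Submodule.smul_mem _ t (Submodule.mem_span_singleton_self r)
  have hdisj : Disjoint K L := by
    refine disjoint_right.2 fun z hz hzK ↦ ?_
    obtain ⟨t, ht⟩ := Submodule.mem_span_singleton.1 (AffineSubspace.mem_mk'.1 hz)
    exact hline t (by rwa [ht, vsub_eq_sub, add_sub_cancel])
  obtain ⟨e, a, b, hKa, hab, hLb⟩ := geometric_hahn_banach_compact_closed hKc hK L.convex
    L.closed_of_finiteDimensional hdisj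
  have hx := hLb x (by simpa using hmem 0)
  refine ⟨e, by_contra fun her ↦ ?_, by linarith [supportFunction_le hne fun p hp ↦ (hKa p hp).le]⟩
  have hlt := hLb _ (hmem ((b - e x) / e r))
  rw [map_add, map_smul, smul_eq_mul, div_mul_cancel₀ _ her, add_sub_cancel] at hlt
  exact hlt.false

lemma exists_supportFunction_lt_of_notMem (hK : IsCompact K) (hKc : Convex ℝ K) (hne : K.Nonempty)
    (hx : x ∉ K) : ∃ e : StrongDual ℝ E, supportFunction K e < e x := by
  obtain ⟨e, a, hKa, hax⟩ := geometric_hahn_banach_closed_point hKc hK.isClosed hx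
  exact ⟨e, (supportFunction_le hne fun p hp ↦ (hKa p hp).le).trans_lt hax⟩

lemma exists_add_smul_apply_eq_supportFunction (hK : IsCompact K) (hne : K.Nonempty)
    {e : StrongDual ℝ E} (he : supportFunction K e < e x) (f : StrongDual ℝ E) :
    ∃ ρ : ℝ, (f + ρ • e) x = supportFunction K (f + ρ • e) := by
  have hcont : Continuous fun ρ : ℝ ↦ supportFunction K (f + ρ • e) - (f + ρ • e) x :=
    ((continuous_supportFunction hK).comp (by fun_prop)).sub (by fun_prop)
  obtain ⟨δ, hδ, heδ⟩ : ∃ δ, 0 < δ ∧ supportFunction K e = e x - δ :=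
    ⟨e x - supportFunction K e, sub_pos.2 he, by ring⟩
  set c := supportFunction K f - f x
  have hcδ : |c| / δ * δ = |c| := div_mul_cancel₀ _ hδ.ne'
  have hpos := supportFunction_add_smul_le hK hne f e (ρ := |c| / δ) (by positivity)
  have hneg := supportFunction_add_smul_le hK hne (f + (-(|c| / δ)) • e) e (ρ := |c| / δ)
    (by positivity)
  rw [heδ] at hpos
  rw [add_assoc, ← add_smul, neg_add_cancel, zero_smul, add_zero, heδ] at hneg
  obtain ⟨ρ, hρ⟩ := mem_range_of_exists_le_of_exists_ge hcont (c := 0)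
    ⟨|c| / δ, by
      simp only [add_apply, smul_apply, smul_eq_mul]
      nlinarith [le_abs_self c]⟩
    ⟨-(|c| / δ), by
      simp only [add_apply, smul_apply, smul_eq_mul]
      nlinarith [neg_abs_le c]⟩
  exact ⟨ρ, (sub_eq_zero.1 hρ).symm⟩

lemma exists_apply_eq_supportFunction_of_line_notMem [FiniteDimensional ℝ E]
    (hE : 3 ≤ finrank ℝ E) (hK : IsCompact K) (hKc : Convex ℝ K) (hint : (interior K).Nonempty)
    (hline : ∀ t : ℝ, x + t • r ∉ K) (hv : v ∉ Submodule.span ℝ {r}) :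
    ∃ u : StrongDual ℝ E, u x = supportFunction K u ∧ u r = 0 ∧ u v ≠ 0 := by
  have hne : K.Nonempty := hint.mono interior_subset
  obtain ⟨e, her, hex⟩ := exists_supportFunction_lt_of_line_notMem hK hKc hne hline
  by_cases hev : e v = 0
  · obtain ⟨f, hfv, hfr⟩ := exists_strongDual_ne_zero_of_notMem hv
    obtain ⟨ρ, hρ⟩ := exists_add_smul_apply_eq_supportFunction hK hne hex f
    exact ⟨f + ρ • e, hρ, by simp [her, hfr r (Submodule.mem_span_singleton_self r)],
      by simpa [hev] using hfv⟩
  · obtain ⟨w, hw⟩ := exists_notMem_span_range (𝕜 := ℝ) (by rw [Fintype.card_fin]; omega) ![r, v]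
    obtain ⟨f, hfw, hf⟩ := exists_strongDual_ne_zero_of_notMem hw
    have hfr : f r = 0 := hf r (Submodule.subset_span ⟨0, rfl⟩)
    have hfv : f v = 0 := hf v (Submodule.subset_span ⟨1, rfl⟩)
    obtain ⟨ρ, hρ⟩ := exists_add_smul_apply_eq_supportFunction hK hne hex f
    obtain ⟨τ, hτ⟩ := exists_add_smul_apply_eq_supportFunction hK hne hex (-f)
    by_cases hρ₀ : ρ = 0
    · by_cases hτ₀ : τ = 0
      · -- Here `x` would lie on both supporting hyperplanes parallel to `ker f`.
        subst hρ₀ hτ₀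
        have hwidth := supportFunction_add_supportFunction_neg_pos hK hint (u := f)
          fun h ↦ hfw (by simp [h])
        simp only [zero_smul, add_zero, neg_apply] at hρ hτ
        linarith
      · exact ⟨-f + τ • e, hτ, by simp [her, hfr], by simp [hfv, hτ₀, hev]⟩
    · exact ⟨f + ρ • e, hρ, by simp [her, hfr], by simp [hfv, hρ₀, hev]⟩

lemma exists_ne_zero_apply_eq_supportFunction (hE : 2 ≤ finrank ℝ E) (hK : IsCompact K)
    (hKc : Convex ℝ K) (hne : K.Nonempty) (hx : x ∉ K) :
    ∃ u : StrongDual ℝ E, u ≠ 0 ∧ u x = supportFunction K u := by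
  obtain ⟨e, hex⟩ := exists_supportFunction_lt_of_notMem hK hKc hne hx
  obtain ⟨d, hd, hdual⟩ := exists_ne_zero_forall_dual_eq_zero (𝕜 := ℝ) (V := E)
    (by rw [Fintype.card_fin]; omega) ![(e : Dual ℝ E)]
  have hed : e d = 0 := hdual 0
  obtain ⟨f, hfd⟩ := SeparatingDual.exists_ne_zero (R := ℝ) hd
  obtain ⟨ρ, hρ⟩ := exists_add_smul_apply_eq_supportFunction hK hne hex f
  exact ⟨f + ρ • e, fun h ↦ hfd (by simpa [hed] using DFunLike.congr_fun h d), hρ⟩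

end Tangents

section OppositePoints

variable {E : Type*} [NormedAddCommGroup E] [NormedSpace ℝ E]

/-- `y` lies on the opposite parallel supporting hyperplane for every supporting hyperplane of `K`
through `x`. This is what remains of a central symmetry between the support cones at `x` and `y`
when they are described by their supporting hyperplanes. -/
def IsOppositePoint (K : Set E) (x y : E) : Prop :=
  ∀ u : StrongDual ℝ E, u x = supportFunction K u → u y = -supportFunction K (-u)

variable {K S : Set E} {σ : E → E} {x y x' y' p p' : E} {u : StrongDual ℝ E}

/-- The functional `v ↦ v y + h (-v)` vanishes on the hypersurface `{v | h v = v x}`, so at `u` its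
derivative `y - p'` is a multiple of the derivative `p - x` of `v ↦ h v - v x`. -/
lemma IsOppositePoint.exists_eq_add_smul (hxy : IsOppositePoint K x y) (hK : IsCompact K)
    (hKs : StrictConvex ℝ K) (hx : x ∉ K) (hu : u ≠ 0) (hux : u x = supportFunction K u)
    (hp : p ∈ K) (hup : u p = supportFunction K u)
    (hp' : p' ∈ K) (hup' : (-u) p' = supportFunction K (-u)) : ∃ l : ℝ, y = p' + l • (x - p) := by
  have hderiv : HasStrictFDerivAt (fun v ↦ supportFunction K v - v x)
      (ContinuousLinearMap.apply ℝ ℝ p - ContinuousLinearMap.apply ℝ ℝ x) u :=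
    (hasStrictFDerivAt_supportFunction hK hp fun q hq huq ↦
      eq_of_apply_eq_supportFunction hK hKs hu hq huq hp hup).sub
        (ContinuousLinearMap.apply ℝ ℝ x).hasStrictFDerivAt
  have hderiv' : HasStrictFDerivAt (fun v : StrongDual ℝ E ↦ v y + supportFunction K (-v))
      (ContinuousLinearMap.apply ℝ ℝ y + -ContinuousLinearMap.apply ℝ ℝ p') u :=
    (ContinuousLinearMap.apply ℝ ℝ y).hasStrictFDerivAt.add <|
      hasStrictFDerivAt_supportFunction_neg hK hp' fun q hq huq ↦
        eq_of_apply_eq_supportFunction hK hKs (neg_ne_zero.2 hu) hq huq hp' hup'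
  have hextr : IsLocalExtrOn (fun v : StrongDual ℝ E ↦ v y + supportFunction K (-v))
      {v | supportFunction K v - v x = supportFunction K u - u x} u := by
    refine Or.inl (eventually_nhdsWithin_of_forall fun v hv ↦ le_of_eq ?_)
    have hvx : supportFunction K v - v x = supportFunction K u - u x := hv
    simp only [hxy u hux, hxy v (by linarith), neg_add_cancel]
  obtain ⟨a, b, hab, hsum⟩ := hextr.exists_multipliers_of_hasStrictFDerivAt_1d hderiv hderiv'
  have hzero : a • (p - x) + b • (y - p') = 0 :=
    (SeparatingDual.eq_zero_iff_forall_dual_eq_zero (R := ℝ) _).2 fun v ↦ by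
      simpa [sub_eq_add_neg] using DFunLike.congr_fun hsum v
  have hb : b ≠ 0 := by
    rintro rfl
    have ha : a ≠ 0 := fun ha ↦ hab (by rw [ha, Prod.mk_zero_zero])
    rw [zero_smul, add_zero, smul_eq_zero_iff_right ha, sub_eq_zero] at hzero
    exact hx (hzero ▸ hp)
  refine ⟨a / b, smul_right_injective E hb ?_⟩
  simp only [smul_add, smul_smul, mul_div_cancel₀ a hb]
  linear_combination (norm := module) hzero

lemma IsOppositePoint.exists_sub_eq_smul_sub [FiniteDimensional ℝ E] (hE : 3 ≤ finrank ℝ E)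
    (hK : IsCompact K) (hKc : Convex ℝ K) (hint : (interior K).Nonempty)
    (hxy : IsOppositePoint K x y) (hxy' : IsOppositePoint K x' y')
    (hline : ∀ t : ℝ, x + t • (x' - x) ∉ K) : ∃ s : ℝ, y' - y = s • (x' - x) := by
  by_contra! hne
  obtain ⟨u, hux, hur, huv⟩ := exists_apply_eq_supportFunction_of_line_notMem hE hK hKc hint hline
    (v := y' - y) fun hmem ↦
      let ⟨s, hs⟩ := Submodule.mem_span_singleton.1 hmem
      hne s hs.symm
  have hux' : u x' = supportFunction K u := by rwa [map_sub, sub_eq_zero, hux] at hur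
  exact huv (by rw [map_sub, hxy u hux, hxy' u hux', sub_self])

/-- If `x - p` and `x' - p` are independent, the line through `x` and `x'` stays in the supporting
hyperplane of `u` and avoids `p`, the only point of `K` there. -/
lemma IsOppositePoint.smul_eq_of_linearIndependent [FiniteDimensional ℝ E] (hE : 3 ≤ finrank ℝ E)
    (hK : IsCompact K) (hKs : StrictConvex ℝ K) (hint : (interior K).Nonempty)
    (hu : u ≠ 0) (hp : p ∈ K) (hup : u p = supportFunction K u)
    (hux : u x = supportFunction K u) (hux' : u x' = supportFunction K u)
    (hind : LinearIndependent ℝ ![x - p, x' - p]) {l l' : ℝ}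
    (hxy : IsOppositePoint K x (p' + l • (x - p)))
    (hxy' : IsOppositePoint K x' (p' + l' • (x' - p))) : l = l' := by
  have hpair := LinearIndependent.pair_iff.1 hind
  have hline : ∀ t : ℝ, x + t • (x' - x) ∉ K := by
    intro t ht
    have htp := eq_of_apply_eq_supportFunction hK hKs hu ht (by simp [hux, hux']) hp hup
    obtain ⟨h₁, h₂⟩ := hpair (1 - t) t (by
      calc (1 - t) • (x - p) + t • (x' - p) = x + t • (x' - x) - p := by module
        _ = 0 := by rw [htp, sub_self])
    linarith
  obtain ⟨s, hs⟩ := hxy.exists_sub_eq_smul_sub hE hK hKs.convex hint hxy' hline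
  obtain ⟨h₁, h₂⟩ := hpair (s - l) (l' - s) (by
    calc (s - l) • (x - p) + (l' - s) • (x' - p)
        = (p' + l' • (x' - p) - (p' + l • (x - p))) - s • (x' - x) := by module
      _ = 0 := by rw [hs, sub_self])
  linarith

lemma Encloses.exists_mem_apply_eq (hE : 2 ≤ finrank ℝ E) (hp : Encloses S p)
    (u : StrongDual ℝ E) : ∃ x ∈ S, u x = u p := by
  obtain ⟨d, hd, hdual⟩ := exists_ne_zero_forall_dual_eq_zero (𝕜 := ℝ) (V := E)
    (by rw [Fintype.card_fin]; omega) ![(u : Dual ℝ E)]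
  have hud : u d = 0 := hdual 0
  obtain ⟨t, -, ht⟩ := hp d hd
  exact ⟨p + t • d, ht, by simp [hud]⟩

lemma Encloses.exists_mem_linearIndependent (hE : 3 ≤ finrank ℝ E) (hp : Encloses S p)
    (u : StrongDual ℝ E) {a b : E} (ha : a ≠ 0) (hb : b ≠ 0) :
    ∃ z ∈ S, u z = u p ∧ LinearIndependent ℝ ![a, z - p] ∧ LinearIndependent ℝ ![b, z - p] := by
  obtain ⟨g, hga, hgb⟩ := SeparatingDual.exists_eq_one_ne_zero_of_ne_zero_pair (R := ℝ) ha hb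
  obtain ⟨d, hd, hdual⟩ := exists_ne_zero_forall_dual_eq_zero (𝕜 := ℝ) (V := E)
    (by rw [Fintype.card_fin]; omega) ![(u : Dual ℝ E), (g : Dual ℝ E)]
  have hud : u d = 0 := hdual 0
  have hgd : g d = 0 := hdual 1
  obtain ⟨t, ht, hz⟩ := hp d hd
  have hgz : g (p + t • d - p) = 0 := by simp [hgd]
  have hz₀ : p + t • d - p ≠ 0 := by simp [ht.ne', hd]
  exact ⟨p + t • d, hz, by simp [hud],
    linearIndependent_pair_of_dual (f := (g : Dual ℝ E)) (by simp [hga]) hgz hz₀,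
    linearIndependent_pair_of_dual (f := (g : Dual ℝ E)) hgb hgz hz₀⟩

lemma exists_forall_eq_smul_add [FiniteDimensional ℝ E] (hE : 3 ≤ finrank ℝ E)
    (hK : IsCompact K) (hKs : StrictConvex ℝ K) (hint : (interior K).Nonempty)
    (hKS : Disjoint K S) (hS : ∀ q ∈ K, Encloses S q)
    (hσ : ∀ x ∈ S, IsOppositePoint K x (σ x)) (hu : u ≠ 0) :
    ∃ (l : ℝ) (b : E), ∀ x ∈ S, u x = supportFunction K u → σ x = l • x + b := by
  have hne : K.Nonempty := hint.mono interior_subset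
  obtain ⟨p, hp, hup⟩ := exists_apply_eq_supportFunction hK hne u
  obtain ⟨p', hp', hup'⟩ := exists_apply_eq_supportFunction hK hne (-u)
  have hcoef : ∀ x ∈ S, u x = supportFunction K u → ∃ l : ℝ, σ x = p' + l • (x - p) :=
    fun x hx hux ↦ (hσ x hx).exists_eq_add_smul hK hKs (hKS.notMem_of_mem_right hx) hu hux hp hup
      hp' hup'
  have hsub : ∀ x ∈ S, x - p ≠ 0 := fun x hx ↦
    sub_ne_zero.2 fun h ↦ hKS.notMem_of_mem_left hp (h ▸ hx)
  have heq : ∀ {x z : E} {l k : ℝ}, x ∈ S → z ∈ S → u x = supportFunction K u →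
      u z = supportFunction K u → LinearIndependent ℝ ![x - p, z - p] →
      σ x = p' + l • (x - p) → σ z = p' + k • (z - p) → l = k :=
    fun hx hz hux huz hind hl hk ↦ IsOppositePoint.smul_eq_of_linearIndependent hE hK hKs hint hu
      hp hup hux huz hind (hl ▸ hσ _ hx) (hk ▸ hσ _ hz)
  by_cases hsec : ∃ x ∈ S, u x = supportFunction K u
  · obtain ⟨x, hx, hux⟩ := hsec
    obtain ⟨l, hl⟩ := hcoef x hx hux
    refine ⟨l, p' - l • p, fun x' hx' hux' ↦ ?_⟩
    obtain ⟨l', hl'⟩ := hcoef x' hx' hux'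
    obtain ⟨z, hz, huz, hind, hind'⟩ :=
      (hS p hp).exists_mem_linearIndependent hE u (hsub x hx) (hsub x' hx')
    rw [hup] at huz
    obtain ⟨k, hk⟩ := hcoef z hz huz
    rw [hl', heq hx hz hux huz hind hl hk, heq hx' hz hux' huz hind' hl' hk]
    module
  · exact ⟨0, 0, fun x hx hux ↦ (hsec ⟨x, hx, hux⟩).elim⟩

lemma Encloses.smul_add_unique (hE : 3 ≤ finrank ℝ E) {q : E} (hq : Encloses S q)
    {u v : StrongDual ℝ E} {l l' : ℝ} {b b' : E} (hu : ∀ x ∈ S, u x = u q → σ x = l • x + b)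
    (hv : ∀ x ∈ S, v x = v q → σ x = l' • x + b') : l = l' ∧ b = b' := by
  obtain ⟨d, hd, hdual⟩ := exists_ne_zero_forall_dual_eq_zero (𝕜 := ℝ) (V := E)
    (by rw [Fintype.card_fin]; omega) ![(u : Dual ℝ E), (v : Dual ℝ E)]
  have hud : u d = 0 := hdual 0
  have hvd : v d = 0 := hdual 1
  have hagree : ∀ t : ℝ, q + t • d ∈ S → l • (q + t • d) + b = l' • (q + t • d) + b' := fun t ht ↦
    (hu _ ht (by simp [hud])).symm.trans (hv _ ht (by simp [hvd]))
  obtain ⟨s, hs, hsS⟩ := hq d hd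
  obtain ⟨t, ht, htS⟩ := hq (-d) (neg_ne_zero.2 hd)
  rw [smul_neg, ← neg_smul] at htS
  have hsd : ((l - l') * (s + t)) • d = 0 := by
    linear_combination (norm := module) hagree s hsS - hagree (-t) htS
  have hl : l = l' := by
    rw [smul_eq_zero_iff_left hd, mul_eq_zero, sub_eq_zero] at hsd
    exact hsd.resolve_right (by positivity)
  exact ⟨hl, by simpa [hl] using hagree s hsS⟩

lemma eventually_exists_mem_apply_eq_supportFunction (hK : IsCompact K) (hKs : StrictConvex ℝ K)
    (hu : u ≠ 0) (hp : p ∈ K) (hup : u p = supportFunction K u) {U : Set E} (hU : U ∈ 𝓝 p) :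
    ∀ᶠ v in 𝓝 u, ∃ q ∈ U, u q = supportFunction K u ∧ v q = supportFunction K v := by
  obtain ⟨ε, hε, hεU⟩ := Metric.mem_nhds_iff.1 hU
  obtain ⟨a, ha⟩ : ∃ a, u a = 1 := by
    obtain ⟨w, hw⟩ := DFunLike.ne_iff.1 hu
    exact ⟨(u w)⁻¹ • w, by simpa using inv_mul_cancel₀ hw⟩
  -- `proj` projects to the supporting hyperplane of `u` along `a`, where `u a = 1`, `v a > 0`.
  let proj : E → E := fun z ↦ z + (supportFunction K u - u z) • a
  have hproj : Continuous proj := by fun_prop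
  have hnear : ∀ᶠ v in 𝓝 u, ∀ q ∈ K, v q = supportFunction K v → q ∈ proj ⁻¹' ball p ε :=
    eventually_forall_apply_eq_supportFunction_imp_mem hK (isOpen_ball.preimage hproj)
      fun q hq huq ↦ by
        obtain rfl := eq_of_apply_eq_supportFunction hK hKs hu hq huq hp hup
        simpa [proj, huq]
  have hpos : ∀ᶠ v in 𝓝 u, 0 < v a :=
    (by fun_prop : Continuous fun v : StrongDual ℝ E ↦ v a).continuousAt.eventually_const_lt
      (by simp [ha])
  filter_upwards [hnear, hpos] with v hv hva
  obtain ⟨q, hq, hvq⟩ := exists_apply_eq_supportFunction hK ⟨p, hp⟩ v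
  have hqK := apply_le_supportFunction hK u hq
  have hvproj : supportFunction K v ≤ v (proj q) := by
    simp only [proj, map_add, map_smul, smul_eq_mul, hvq]
    nlinarith
  obtain ⟨z, hz, hvz⟩ := (convex_segment (𝕜 := ℝ) p (proj q)).isPreconnected.intermediate_value
    (left_mem_segment ℝ p _) (right_mem_segment ℝ p _) v.continuous.continuousOn
    ⟨apply_le_supportFunction hK v hp, hvproj⟩
  have hplane : Convex ℝ {z | u z = supportFunction K u} := convex_hyperplane u.isLinear _
  exact ⟨z, hεU ((convex_ball p ε).segment_subset (mem_ball_self hε) (hv q hq hvq) hz),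
    hplane.segment_subset hup (by simp [proj, ha]) hz, hvz⟩

end OppositePoints

section CentralSymmetry

variable {E : Type*} [NormedAddCommGroup E] [NormedSpace ℝ E] {K S : Set E} {σ : E → E} {b : E}

lemma exists_forall_ne_zero_eq_smul_add [FiniteDimensional ℝ E] (hE : 3 ≤ finrank ℝ E)
    (hK : IsCompact K) (hKs : StrictConvex ℝ K) (hint : (interior K).Nonempty)
    (hKS : Disjoint K S) (hS : ∀ᶠ q in 𝓝ˢ K, Encloses S q)
    (hσ : ∀ x ∈ S, IsOppositePoint K x (σ x)) :
    ∃ (l : ℝ) (b : E), ∀ u : StrongDual ℝ E, u ≠ 0 →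
      ∀ x ∈ S, u x = supportFunction K u → σ x = l • x + b := by
  have hsec := fun (u : StrongDual ℝ E) (hu : u ≠ 0) ↦
    exists_forall_eq_smul_add hE hK hKs hint hKS hS.self_of_nhdsSet hσ hu
  choose! l b hlb using hsec
  have hloc : ∀ u ∈ ({0}ᶜ : Set (StrongDual ℝ E)), ∀ᶠ v in 𝓝[{0}ᶜ] u, l u = l v ∧ b u = b v := by
    intro u hu
    obtain ⟨p, hp, hup⟩ := exists_apply_eq_supportFunction hK (hint.mono interior_subset) u
    filter_upwards [self_mem_nhdsWithin, nhdsWithin_le_nhds <|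
      eventually_exists_mem_apply_eq_supportFunction hK hKs hu hp hup
        (hS.filter_mono (nhds_le_nhdsSet hp))] with v hv ⟨q, hq, huq, hvq⟩
    exact Encloses.smul_add_unique hE hq (huq ▸ hlb u hu) (hvq ▸ hlb v hv)
  have hconn : IsConnected ({0}ᶜ : Set (StrongDual ℝ E)) := by
    refine isConnected_compl_singleton_of_one_lt_rank (one_lt_rank_of_one_lt_finrank ?_) 0
    rw [← LinearMap.toContinuousLinearMap.finrank_eq, Subspace.dual_finrank_eq]
    omega
  obtain ⟨u, hu⟩ := hconn.nonempty
  refine ⟨l u, b u, fun v hv x hx hvx ↦ ?_⟩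
  obtain ⟨hl, hb⟩ := hconn.isPreconnected.induction₂ (fun u v ↦ l u = l v ∧ b u = b v) hloc
    (fun _ _ _ _ _ _ h₁ h₂ ↦ ⟨h₁.1.trans h₂.1, h₁.2.trans h₂.2⟩)
    (fun _ _ _ _ h ↦ ⟨h.1.symm, h.2.symm⟩) hu hv
  rw [hl, hb, hlb v hv x hx hvx]

lemma exists_forall_eq_sub [FiniteDimensional ℝ E] (hE : 3 ≤ finrank ℝ E)
    (hK : IsCompact K) (hKs : StrictConvex ℝ K) (hint : (interior K).Nonempty)
    (hKS : Disjoint K S) (hS : ∀ᶠ q in 𝓝ˢ K, Encloses S q)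
    (hσ : ∀ x ∈ S, IsOppositePoint K x (σ x)) :
    ∃ b : E, (∀ x ∈ S, σ x = b - x) ∧
      ∀ u : StrongDual ℝ E, supportFunction K u - supportFunction K (-u) = u b := by
  have hne : K.Nonempty := hint.mono interior_subset
  obtain ⟨l, b, hlb⟩ := exists_forall_ne_zero_eq_smul_add hE hK hKs hint hKS hS hσ
  have hneg : ∀ u : StrongDual ℝ E, u ≠ 0 →
      -supportFunction K (-u) = l * supportFunction K u + u b := by
    intro u hu
    obtain ⟨p, hp, hup⟩ := exists_apply_eq_supportFunction hK hne u
    obtain ⟨x, hx, hux⟩ := (hS.self_of_nhdsSet p hp).exists_mem_apply_eq (by omega) u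
    rw [hup] at hux
    rw [← hσ x hx u hux, hlb u hu x hx hux, map_add, map_smul, smul_eq_mul, hux]
  have hcoef : ∀ u : StrongDual ℝ E, u ≠ 0 → l = -1 := by
    intro u hu
    have h₁ := hneg u hu
    have h₂ := hneg (-u) (neg_ne_zero.2 hu)
    have hwidth := supportFunction_add_supportFunction_neg_pos hK hint hu
    rw [neg_neg, neg_apply] at h₂
    have hprod : (l + 1) * (supportFunction K u + supportFunction K (-u)) = 0 := by linarith
    linarith [(mul_eq_zero.1 hprod).resolve_right hwidth.ne']
  refine ⟨b, fun x hx ↦ ?_, fun u ↦ ?_⟩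
  · obtain ⟨u, hu, hux⟩ := exists_ne_zero_apply_eq_supportFunction (by omega) hK hKs.convex hne
      (hKS.notMem_of_mem_right hx)
    rw [hlb u hu x hx hux, hcoef u hu]
    module
  · rcases eq_or_ne u 0 with rfl | hu
    · simp
    · have hu_neg := hneg u hu
      rw [hcoef u hu] at hu_neg
      linarith

lemma sub_mem_of_forall_supportFunction_sub_eq (hK : IsCompact K) (hKc : Convex ℝ K)
    (hb : ∀ u : StrongDual ℝ E, supportFunction K u - supportFunction K (-u) = u b) {z : E}
    (hz : z ∈ K) : b - z ∈ K := by
  by_contra hbz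
  obtain ⟨e, he⟩ := exists_supportFunction_lt_of_notMem hK hKc ⟨z, hz⟩ hbz
  have hez := apply_le_supportFunction hK (-e) hz
  have := hb e
  rw [neg_apply] at hez
  rw [map_sub] at he
  linarith

theorem exists_center_of_forall_isOppositePoint [FiniteDimensional ℝ E] (hE : 3 ≤ finrank ℝ E)
    (hK : IsCompact K) (hKs : StrictConvex ℝ K) (hint : (interior K).Nonempty)
    (hKS : Disjoint K S) (hS : ∀ᶠ q in 𝓝ˢ K, Encloses S q)
    (hopp : ∀ x ∈ S, ∃ y ∈ S, IsOppositePoint K x y) :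
    ∃ c : E, (∀ z, z ∈ K ↔ (2 : ℝ) • c - z ∈ K) ∧ ∀ z, z ∈ S ↔ (2 : ℝ) • c - z ∈ S := by
  choose! σ hσS hσ using hopp
  obtain ⟨b, hσb, hb⟩ := exists_forall_eq_sub hE hK hKs hint hKS hS hσ
  have hiff : ∀ {T : Set E}, (∀ z ∈ T, b - z ∈ T) → ∀ z, z ∈ T ↔ (2 : ℝ) • (2⁻¹ : ℝ) • b - z ∈ T :=
    fun hT z ↦ by
      rw [smul_inv_smul₀ two_ne_zero]
      exact ⟨hT z, fun hz ↦ sub_sub_cancel b z ▸ hT _ hz⟩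
  exact ⟨(2⁻¹ : ℝ) • b, hiff fun z ↦ sub_mem_of_forall_supportFunction_sub_eq hK hKs.convex hb,
    hiff fun z hz ↦ hσb z hz ▸ hσS z hz⟩

end CentralSymmetry

section Cones

variable {n : ℕ} {K : Set (EuclideanSpace ℝ (Fin n))} {x y z c : EuclideanSpace ℝ (Fin n)}
  {e u : StrongDual ℝ (EuclideanSpace ℝ (Fin n))}

lemma subset_cone (K : Set (EuclideanSpace ℝ (Fin n))) (x : EuclideanSpace ℝ (Fin n)) :
    K ⊆ cone K x :=
  fun w hw ↦ ⟨w, hw, 1, zero_le_one, by simp⟩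

lemma apex_mem_cone (hne : K.Nonempty) (x : EuclideanSpace ℝ (Fin n)) : x ∈ cone K x :=
  let ⟨w, hw⟩ := hne
  ⟨w, hw, 0, le_rfl, by simp⟩

lemma convex_cone (hK : Convex ℝ K) (x : EuclideanSpace ℝ (Fin n)) : Convex ℝ (cone K x) := by
  rintro _ ⟨w₁, hw₁, t₁, ht₁, rfl⟩ _ ⟨w₂, hw₂, t₂, ht₂, rfl⟩ a b ha hb hab
  have hsum : (a * t₁) • w₁ + (b * t₂) • w₂ ∈ (a * t₁ + b * t₂) • K := by
    rw [hK.add_smul (by positivity) (by positivity)]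
    exact add_mem_add (smul_mem_smul_set hw₁) (smul_mem_smul_set hw₂)
  obtain ⟨w, hw, hsw⟩ := hsum
  refine ⟨w, hw, a * t₁ + b * t₂, by positivity, ?_⟩
  have hsw : (a * t₁ + b * t₂) • w = (a * t₁) • w₁ + (b * t₂) • w₂ := hsw
  obtain rfl : b = 1 - a := by linarith
  linear_combination (norm := module) -hsw

lemma two_smul_sub_mem_cone (hz : z ∈ cone K x) : (2 : ℝ) • z - x ∈ cone K x := by
  obtain ⟨w, hw, t, ht, rfl⟩ := hz
  exact ⟨w, hw, 2 * t, by positivity, by module⟩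

lemma apply_le_apply_apex_of_mem_cone (hK : IsCompact K) (hu : supportFunction K u ≤ u x)
    (hz : z ∈ cone K x) : u z ≤ u x := by
  obtain ⟨w, hw, t, ht, rfl⟩ := hz
  have huw := (apply_le_supportFunction hK u hw).trans hu
  rw [map_add, map_smul, map_sub, smul_eq_mul]
  nlinarith

lemma apply_lt_apply_apex_of_mem_cone (hK : IsCompact K) (he : supportFunction K e < e x)
    (hz : z ∈ cone K x) (hzx : z ≠ x) : e z < e x := by
  obtain ⟨w, hw, t, ht, rfl⟩ := hz
  have hew := (apply_le_supportFunction hK e hw).trans_lt he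
  have ht₀ : 0 < t := ht.lt_of_ne fun h ↦ hzx (by simp [← h])
  rw [map_add, map_smul, map_sub, smul_eq_mul]
  nlinarith

lemma isCompact_cone_inter (hK : IsCompact K) (he : supportFunction K e < e x) (r : ℝ) :
    IsCompact (cone K x ∩ {z | r ≤ e z}) := by
  let T := (e x - r) / (e x - supportFunction K e)
  have hcone : cone K x ∩ {z | r ≤ e z} =
      (fun q : ℝ × EuclideanSpace ℝ (Fin n) ↦ x + q.1 • (q.2 - x)) '' (Icc 0 T ×ˢ K) ∩
        {z | r ≤ e z} := by
    ext z
    refine and_congr_left fun hr ↦ ⟨?_, ?_⟩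
    · rintro ⟨w, hw, t, ht, rfl⟩
      refine ⟨(t, w), ⟨⟨ht, ?_⟩, hw⟩, rfl⟩
      have hr : r ≤ e (x + t • (w - x)) := hr
      have hew := apply_le_supportFunction hK e hw
      rw [map_add, map_smul, map_sub, smul_eq_mul] at hr
      rw [le_div_iff₀ (sub_pos.2 he)]
      nlinarith
    · rintro ⟨⟨t, w⟩, ⟨ht, hw⟩, rfl⟩
      exact ⟨w, hw, t, ht.1, rfl⟩
  rw [hcone]
  exact ((isCompact_Icc.prod hK).image (by fun_prop)).inter_right
    (isClosed_le continuous_const e.continuous)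

lemma isClosed_cone (hK : IsCompact K) (hKc : Convex ℝ K) (hne : K.Nonempty) (hx : x ∉ K) :
    IsClosed (cone K x) := by
  obtain ⟨e, he⟩ := exists_supportFunction_lt_of_notMem hK hKc hne hx
  refine isClosed_of_closure_subset fun z hz ↦ ?_
  have hopen : IsOpen {w | e z - 1 < e w} := isOpen_lt continuous_const e.continuous
  have hsub : {w | e z - 1 < e w} ∩ cone K x ⊆ cone K x ∩ {w | e z - 1 ≤ e w} :=
    fun w (hw : e z - 1 < e w ∧ w ∈ cone K x) ↦ ⟨hw.2, hw.1.le⟩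
  have hmem : z ∈ closure (cone K x ∩ {w | e z - 1 ≤ e w}) :=
    closure_mono hsub (hopen.inter_closure ⟨sub_one_lt (e z), hz⟩)
  rw [(isCompact_cone_inter hK he _).isClosed.closure_eq] at hmem
  exact hmem.1

lemma convexHull_supportCone (hn : 2 ≤ n) (hK : IsCompact K) (hKc : Convex ℝ K)
    (hne : K.Nonempty) (hx : x ∉ K) : convexHull ℝ (supportCone K x) = cone K x := by
  refine (convexHull_min ?_ (convex_cone hKc x)).antisymm fun z hz ↦ ?_
  · exact (isClosed_cone hK hKc hne hx).frontier_subset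
  obtain ⟨e, he⟩ := exists_supportFunction_lt_of_notMem hK hKc hne hx
  obtain ⟨v, hv, hdual⟩ := exists_ne_zero_forall_dual_eq_zero (𝕜 := ℝ)
    (V := EuclideanSpace ℝ (Fin n)) (by rw [Fintype.card_fin, finrank_euclideanSpace_fin]; omega)
    ![(e : Dual ℝ (EuclideanSpace ℝ (Fin n)))]
  have hev : e v = 0 := hdual 0
  have hleave : ∀ d : EuclideanSpace ℝ (Fin n), d ≠ 0 → e d = 0 →
      ∃ t : ℝ, 0 < t ∧ z + t • d ∉ cone K x := by
    intro d hd hed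
    obtain ⟨t, ht, htd⟩ :=
      exists_add_smul_notMem_of_isBounded (isCompact_cone_inter hK he (e z)).isBounded z hd
    exact ⟨t, ht, fun hmem ↦ htd ⟨hmem, by simp [hed]⟩⟩
  obtain ⟨s, hs, hsv⟩ := hleave v hv hev
  obtain ⟨t, ht, htv⟩ := hleave (-v) (neg_ne_zero.2 hv) (by simp [hev])
  exact mem_convexHull_frontier hz hs ht hsv htv

lemma cone_eq_image_of_supportCone_eq_image (hn : 2 ≤ n) (hK : IsCompact K) (hKc : Convex ℝ K)
    (hne : K.Nonempty) (hx : x ∉ K) (hy : y ∉ K)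
    (f : EuclideanSpace ℝ (Fin n) →ᵃ[ℝ] EuclideanSpace ℝ (Fin n))
    (hf : supportCone K y = f '' supportCone K x) : cone K y = f '' cone K x := by
  rw [← convexHull_supportCone hn hK hKc hne hx, ← convexHull_supportCone hn hK hKc hne hy, hf,
    AffineMap.image_convexHull]

lemma eq_sub_of_mem_cone_iff (hK : IsCompact K) (hKc : Convex ℝ K) (hne : K.Nonempty) (hx : x ∉ K)
    (hcone : ∀ z, z ∈ cone K x ↔ (2 : ℝ) • c - z ∈ cone K y) : y = (2 : ℝ) • c - x := by
  obtain ⟨e, he⟩ := exists_supportFunction_lt_of_notMem hK hKc hne hx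
  have hcone' : ∀ z ∈ cone K y, (2 : ℝ) • c - z ∈ cone K x := fun z hz ↦
    (hcone _).2 (by rwa [sub_sub_cancel])
  set x' := (2 : ℝ) • c - y with hx'
  have hmem : x' ∈ cone K x := hcone' y (apex_mem_cone hne y)
  have hmem' : (2 : ℝ) • x - x' ∈ cone K x := by
    convert hcone' _ (two_smul_sub_mem_cone ((hcone x).1 (apex_mem_cone hne x))) using 1
    rw [hx']
    module
  -- `e` has its strict maximum over `cone K x` at `x`, so `x` is not the midpoint of two others.
  have hxx' : x' = x := by
    by_contra hne'
    have hlt := apply_lt_apply_apex_of_mem_cone hK he hmem hne'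
    have hle := apply_le_apply_apex_of_mem_cone hK he.le hmem'
    rw [map_sub, map_smul, smul_eq_mul] at hle
    linarith
  rw [← hxx', hx', sub_sub_cancel]

lemma isOppositePoint_of_mem_cone_iff (hK : IsCompact K) (hKc : Convex ℝ K) (hne : K.Nonempty)
    (hx : x ∉ K) (hcone : ∀ z, z ∈ cone K x ↔ (2 : ℝ) • c - z ∈ cone K y) :
    IsOppositePoint K x y := by
  intro u hux
  obtain rfl := eq_sub_of_mem_cone_iff hK hKc hne hx hcone
  have hle : supportFunction K (-u) ≤ -u ((2 : ℝ) • c - x) := by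
    refine supportFunction_le hne fun w hw ↦ ?_
    have hwc : (2 : ℝ) • c - w ∈ cone K x :=
      (hcone _).2 (by simpa only [sub_sub_cancel] using subset_cone K _ hw)
    have hwx := apply_le_apply_apex_of_mem_cone hK hux.ge hwc
    rw [map_sub] at hwx
    rw [map_sub, neg_apply]
    linarith
  obtain ⟨p, hp, hup⟩ := exists_apply_eq_supportFunction hK hne u
  obtain ⟨w, hw, t, -, hpw⟩ := (hcone p).1 (subset_cone K x hp)
  have htw : t * (u w - u ((2 : ℝ) • c - x)) = 0 := by
    have := congrArg u hpw
    simp only [map_add, map_sub, map_smul, smul_eq_mul, hup, ← hux] at this ⊢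
    linarith
  have ht : t ≠ 0 := by
    rintro rfl
    rw [zero_smul, add_zero, sub_right_inj] at hpw
    exact hx (hpw ▸ hp)
  have huw : u w = u ((2 : ℝ) • c - x) := sub_eq_zero.1 ((mul_eq_zero.1 htw).resolve_left ht)
  have hge := apply_le_supportFunction hK (-u) hw
  rw [neg_apply, huw] at hge
  linarith

lemma isOppositePoint_of_supportCone_eq (hn : 2 ≤ n) (hK : IsCompact K) (hKc : Convex ℝ K)
    (hne : K.Nonempty) (hx : x ∉ K) (hy : y ∉ K)
    (hxy : supportCone K y = (fun z ↦ (2 : ℝ) • c - z) '' supportCone K x) :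
    IsOppositePoint K x y := by
  have hrefl : ⇑(AffineEquiv.pointReflection ℝ c).toAffineMap = fun z ↦ (2 : ℝ) • c - z := by
    ext1 z
    simp only [AffineEquiv.coe_toAffineMap, AffineEquiv.pointReflection_apply, vsub_eq_sub,
      vadd_eq_add]
    module
  have himage : cone K y = (fun z ↦ (2 : ℝ) • c - z) '' cone K x := by
    rw [← hrefl] at hxy ⊢
    exact cone_eq_image_of_supportCone_eq_image hn hK hKc hne hx hy _ hxy
  refine isOppositePoint_of_mem_cone_iff (c := c) hK hKc hne hx fun z ↦ ?_
  rw [himage]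
  exact sub_right_injective.mem_set_image.symm

end Cones

theorem stmt9_general {n : ℕ} (hn : 3 ≤ n) (K S : Set (EuclideanSpace ℝ (Fin n)))
    (hK : IsConvexBody K) (hKstrict : StrictConvex ℝ K) (hS : IsClosed S)
    (c0 : EuclideanSpace ℝ (Fin n)) (hbdd : IsBounded (connectedComponentIn Sᶜ c0))
    (hint : K ⊆ connectedComponentIn Sᶜ c0)
    (hcones : ∀ x ∈ S, ∃ y ∈ S, ∃ c : EuclideanSpace ℝ (Fin n),
      supportCone K y = (fun z => (2 : ℝ) • c - z) '' supportCone K x) :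
    ∃ c : EuclideanSpace ℝ (Fin n),
      (∀ z, z ∈ K ↔ (2 : ℝ) • c - z ∈ K) ∧ (∀ z, z ∈ S ↔ (2 : ℝ) • c - z ∈ S) := by
  obtain ⟨hKcompact, hKconvex, hKint⟩ := hK
  have hKS : Disjoint K S :=
    subset_compl_iff_disjoint_right.1 (hint.trans (connectedComponentIn_subset _ _))
  have hencl : ∀ᶠ q in 𝓝ˢ K, Encloses S q :=
    eventually_of_mem (hS.isOpen_compl.connectedComponentIn.mem_nhdsSet.2 hint) fun q hq ↦
      encloses_of_isBounded_connectedComponentIn hbdd hq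
  refine exists_center_of_forall_isOppositePoint (by simpa using hn) hKcompact hKstrict hKint hKS
    hencl fun x hx ↦ ?_
  obtain ⟨y, hy, c, hxy⟩ := hcones x hx
  exact ⟨y, hy, isOppositePoint_of_supportCone_eq (by omega) hKcompact hKconvex
    (hKint.mono interior_subset) (hKS.notMem_of_mem_right hx) (hKS.notMem_of_mem_right hy) hxy⟩

/-- Characterization of central symmetry: if for every `x` on a topological sphere `S`
enclosing the strictly convex body `K` there is `y ∈ S` whose support cone is a central
reflection of that from `x`, then `K` and `S` are centrally symmetric and concentric. -/
theorem stmt9 {n : ℕ} (hn : 3 ≤ n) (K S : Set (EuclideanSpace ℝ (Fin n)))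
    (hK : IsConvexBody K) (hKstrict : StrictConvex ℝ K)
    (f : Metric.sphere (0 : EuclideanSpace ℝ (Fin n)) 1 → EuclideanSpace ℝ (Fin n))
    (hfc : Continuous f) (hfinj : Function.Injective f) (hfS : Set.range f = S)
    (c0 : EuclideanSpace ℝ (Fin n)) (hc0 : c0 ∈ interior K)
    (hbdd : IsBounded (connectedComponentIn Sᶜ c0))
    (hint : K ⊆ connectedComponentIn Sᶜ c0)
    (hcones : ∀ x ∈ S, ∃ y ∈ S, ∃ c : EuclideanSpace ℝ (Fin n),
      supportCone K y = (fun z => (2 : ℝ) • c - z) '' supportCone K x) :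
    ∃ c : EuclideanSpace ℝ (Fin n),
      (∀ z, z ∈ K ↔ (2 : ℝ) • c - z ∈ K) ∧ (∀ z, z ∈ S ↔ (2 : ℝ) • c - z ∈ S) :=
  stmt9_general hn K S hK hKstrict (hfS ▸ (isCompact_range hfc).isClosed) c0 hbdd hint hcones
end
end

section
/- Let K, G ⊂ R^n (n ≥ 3) be convex bodies with K ⊂ int G and K symmetric about the origin O. If for every x ∈ bd G the cone C(K,x) generated by K with apex x is ellipsoidal (some hyperplane section of C(K,x) is an ellipsoid), then K is an ellipsoid. -/
open Set Metric Function Bornology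
open scoped RealInnerProductSpace Pointwise

noncomputable section

/-- A cone `C` with apex `x` is ellipsoidal if some hyperplane not through `x` cuts it
in an (n-1)-dimensional ellipsoid (a nondegenerate affine image of a closed unit ball
of dimension n-1). -/
def IsEllipsoidalConeAt {n : ℕ} (C : Set (EuclideanSpace ℝ (Fin n)))
    (x : EuclideanSpace ℝ (Fin n)) : Prop :=
  ∃ (u : EuclideanSpace ℝ (Fin n)) (c : ℝ), u ≠ 0 ∧ ⟪u, x⟫ ≠ c ∧
    ∃ f : EuclideanSpace ℝ (Fin (n - 1)) →ᵃ[ℝ] EuclideanSpace ℝ (Fin n),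
      Function.Injective f ∧ C ∩ {p | ⟪u, p⟫ = c} = f '' closedBall 0 1

/-!
Dual to the ellipsoidal cone with apex `x ∈ ∂G` is a quadratic form `Q_x` whose zeros are, up to
sign, the normals `y` with `h_K(y) = ⟪x, y⟫`. Fix a normal `p ≠ 0` and a point of contact `g` of `K`
with the supporting hyperplane `H` normal to `p`, and scale the `Q_x` with `x ∈ H ∩ ∂G` so that the
polar of `Q_x` at `p` is `2 (g - x)`. On the hyperplane of normals `y` with `⟪x, y⟫ = ⟪x', y⟫` the
forms `Q_x` and `Q_x'` have the same zeros and the same polar at the common zero `p`, so they agree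
there. Newton interpolation at three points of `H ∩ ∂G` then gives
`Q_x(y) = B(y) + ⟪x, y⟫ l(y) + k ⟪x, y⟫²` for all but finitely many of these `x` outside one line.
For `y` near `p` the supporting hyperplanes normal to `p` and to `y` meet inside `G`, hence, as
`n ≥ 3`, both ends of some chord of `G` lie on both of them. At such an end `x` the form `Q_x`
vanishes at `y`; unless `y` is a zero of one of the finitely many exceptional forms, which happens
only in a nowhere dense set, the formula applies to one of the ends and reads
`k h_K(y)² + l(y) h_K(y) + B(y) = 0`.

The discriminant of this equation does not vanish at `p`, so `h_K` is real analytic off the origin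
and one such equation holds everywhere. Comparing it at `y` and `-y` shows that `l` is `-2k` times
the odd part of `h_K`; completing the square exhibits `h_K` as the sum of a linear form and the
square root of a positive definite quadratic form, which is the support function of an ellipsoid.
-/

/-! ### Quadratic forms and hyperplanes -/

section Forms

variable {𝕜 V : Type*} [Field 𝕜] [AddCommGroup V] [Module 𝕜 V]

theorem exists_eq_smul_of_ker_le_ker {b m : V →ₗ[𝕜] 𝕜} (h : ∀ z, b z = 0 → m z = 0) :
    ∃ k : 𝕜, m = k • b := by
  have hmem := mem_span_of_iInf_ker_le_ker (L := fun _ : Unit => b) (K := m) fun z hz =>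
    h z (by simpa using hz)
  rw [range_const, Submodule.mem_span_singleton] at hmem
  exact hmem.imp fun _ hk => hk.symm

theorem exists_eq_linMulLin_of_vanish_on_ker {a : V →ₗ[𝕜] 𝕜} (ha : a ≠ 0)
    {D : QuadraticForm 𝕜 V} (hD : ∀ z, a z = 0 → D z = 0) :
    ∃ m : V →ₗ[𝕜] 𝕜, D = QuadraticMap.linMulLin a m := by
  obtain ⟨v, hv⟩ := LinearMap.surjective ha 1
  refine ⟨D.polarBilin.flip v - D v • a, QuadraticMap.ext fun z => ?_⟩
  have hker : D (z - a z • v) = 0 := hD _ (by simp [hv])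
  rw [sub_eq_add_neg, ← neg_smul, QuadraticMap.map_add D, QuadraticMap.map_smul,
    QuadraticMap.polar_smul_right] at hker
  simp only [QuadraticMap.linMulLin_apply, LinearMap.sub_apply, LinearMap.flip_apply,
    QuadraticMap.polarBilin_apply_apply, LinearMap.smul_apply]
  simp only [smul_eq_mul] at hker ⊢
  linear_combination hker

theorem exists_eq_smul_of_mul_vanish_on_ker {a b m : V →ₗ[𝕜] 𝕜}
    (hab : LinearIndependent 𝕜 ![a, b]) (h : ∀ z, b z = 0 → a z * m z = 0) :
    ∃ k : 𝕜, m = k • b := by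
  obtain ⟨w, hbw, haw⟩ : ∃ w, b w = 0 ∧ a w ≠ 0 := by
    by_contra! hker
    obtain ⟨k, rfl⟩ := exists_eq_smul_of_ker_le_ker hker
    exact one_ne_zero (LinearIndependent.pair_iff.1 hab 1 (-k) (by module)).1
  have hm : ∀ z, b z = 0 → a z ≠ 0 → m z = 0 := fun z hz haz =>
    (mul_eq_zero.1 (h z hz)).resolve_left haz
  refine exists_eq_smul_of_ker_le_ker fun z hz => ?_
  by_cases haz : a z = 0
  · simpa [hm w hbw haw] using hm (z + w) (by simp [hz, hbw]) (by simpa [haz] using haw)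
  · exact hm z hz haz

theorem exists_eq_smul_linMulLin_of_vanish_on_ker {a b : V →ₗ[𝕜] 𝕜}
    (hab : LinearIndependent 𝕜 ![a, b]) {D : QuadraticForm 𝕜 V}
    (hDa : ∀ z, a z = 0 → D z = 0) (hDb : ∀ z, b z = 0 → D z = 0) :
    ∃ k : 𝕜, D = k • QuadraticMap.linMulLin a b := by
  obtain ⟨m, rfl⟩ := exists_eq_linMulLin_of_vanish_on_ker (hab.ne_zero 0) hDa
  obtain ⟨k, rfl⟩ := exists_eq_smul_of_mul_vanish_on_ker hab hDb
  refine ⟨k, QuadraticMap.ext fun z => ?_⟩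
  simp only [QuadraticMap.linMulLin_apply, smul_apply, LinearMap.smul_apply, smul_eq_mul]
  exact mul_left_comm _ _ _

theorem eq_zero_of_vanish_on_three_ker {a b c : V →ₗ[𝕜] 𝕜}
    (hab : LinearIndependent 𝕜 ![a, b]) (hac : LinearIndependent 𝕜 ![a, c])
    (hbc : LinearIndependent 𝕜 ![b, c]) {D : QuadraticForm 𝕜 V}
    (hDa : ∀ z, a z = 0 → D z = 0) (hDb : ∀ z, b z = 0 → D z = 0)
    (hDc : ∀ z, c z = 0 → D z = 0) : D = 0 := by
  obtain ⟨m, rfl⟩ := exists_eq_linMulLin_of_vanish_on_ker (hab.ne_zero 0) hDa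
  obtain ⟨k, rfl⟩ := exists_eq_smul_of_mul_vanish_on_ker hab hDb
  obtain ⟨k', hk'⟩ := exists_eq_smul_of_mul_vanish_on_ker hac hDc
  have hk : k = 0 := (LinearIndependent.pair_iff.1 hbc k (-k') (by rw [hk']; module)).1
  ext z
  simp [hk]

theorem eq_of_polar_eq [NeZero (2 : 𝕜)] {Q Q' : QuadraticForm 𝕜 V} {p : V} {φ : V →ₗ[𝕜] 𝕜}
    (hφ : φ ≠ 0) (hQp : Q p = 0) (hQp' : Q' p = 0)
    (hpol : ∀ v, QuadraticMap.polar Q p v = φ v) (hpol' : ∀ v, QuadraticMap.polar Q' p v = φ v)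
    (hzero : ∀ z, Q z = 0 → Q' z = 0) : Q = Q' := by
  have heq : ∀ v, φ v ≠ 0 → Q v = Q' v := by
    intro v hv
    -- the second zero of `Q` on the line `v + 𝕜 p` is also a zero of `Q'`
    have hz := hzero ((-(Q v / φ v)) • p + v) <| by
      rw [QuadraticMap.map_add Q, QuadraticMap.map_smul, hQp, QuadraticMap.polar_smul_left, hpol,
        smul_eq_mul, smul_eq_mul]
      field_simp
      ring
    rw [QuadraticMap.map_add Q', QuadraticMap.map_smul, hQp', QuadraticMap.polar_smul_left, hpol',
      smul_eq_mul, smul_eq_mul] at hz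
    linear_combination -hz - div_mul_cancel₀ (Q v) hv
  obtain ⟨w, hw⟩ := LinearMap.surjective hφ 1
  ext v
  by_cases hv : φ v = 0
  · have hadd := heq (v + w) (by simp [hv, hw])
    have hsub := heq (v + -w) (by simp [hv, hw])
    have hw := heq w (by simp [hw])
    rw [QuadraticMap.map_add Q, QuadraticMap.map_add Q'] at hadd hsub
    rw [QuadraticMap.polar_neg_right, QuadraticMap.polar_neg_right, QuadraticMap.map_neg,
      QuadraticMap.map_neg] at hsub
    exact mul_left_cancel₀ (two_ne_zero (α := 𝕜)) (by linear_combination hadd + hsub - 2 * hw)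
  · exact heq v hv

/-- The quadratic family `ξ ↦ B + ξ l + k ξ²` of quadratic forms on `V`, parametrised by linear
forms `ξ`; it interpolates the forms attached to the points of a hyperplane. -/
def quadPencil (B : QuadraticForm 𝕜 V) (l : V →ₗ[𝕜] 𝕜) (k : 𝕜) (ξ : V →ₗ[𝕜] 𝕜) :
    QuadraticForm 𝕜 V :=
  B + QuadraticMap.linMulLin ξ l + k • QuadraticMap.linMulLin ξ ξ

variable {B : QuadraticForm 𝕜 V} {l : V →ₗ[𝕜] 𝕜} {k : 𝕜}

theorem quadPencil_apply (ξ : V →ₗ[𝕜] 𝕜) (z : V) :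
    quadPencil B l k ξ z = B z + ξ z * l z + k * (ξ z * ξ z) := rfl

theorem quadPencil_congr {ξ η : V →ₗ[𝕜] 𝕜} {z : V} (h : (ξ - η) z = 0) :
    quadPencil B l k ξ z = quadPencil B l k η z := by
  rw [quadPencil_apply, quadPencil_apply, sub_eq_zero.1 h]

theorem exists_quadPencil {α β γ : V →ₗ[𝕜] 𝕜} (h : LinearIndependent 𝕜 ![γ - α, γ - β])
    (hαβ : α ≠ β) {Qα Qβ Qγ : QuadraticForm 𝕜 V} (hβ : ∀ z, (β - α) z = 0 → Qβ z = Qα z)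
    (hγα : ∀ z, (γ - α) z = 0 → Qγ z = Qα z) (hγβ : ∀ z, (γ - β) z = 0 → Qγ z = Qβ z) :
    ∃ B l k, quadPencil B l k α = Qα ∧ quadPencil B l k β = Qβ ∧ quadPencil B l k γ = Qγ := by
  -- Newton's divided differences `m` and `k`
  obtain ⟨m, hm⟩ := exists_eq_linMulLin_of_vanish_on_ker (D := Qβ - Qα) (sub_ne_zero.2 hαβ.symm)
    fun z hz => sub_eq_zero.2 (hβ z hz)
  have hm' : ∀ z, Qβ z - Qα z = (β z - α z) * m z := fun z => congr($hm z)
  obtain ⟨k, hk⟩ := exists_eq_smul_linMulLin_of_vanish_on_ker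
    (D := Qγ - Qα - QuadraticMap.linMulLin (γ - α) m) h
    (fun z hz => by simp [hγα z hz, hz])
    fun z hz => by
      have hγβz : γ z = β z := sub_eq_zero.1 hz
      simp [hγβ z hz, hγβz, hm']
  have hk' : ∀ z, Qγ z - Qα z - (γ z - α z) * m z = k * ((γ z - α z) * (γ z - β z)) :=
    fun z => congr($hk z)
  refine ⟨Qα - QuadraticMap.linMulLin α m + k • QuadraticMap.linMulLin α β,
    m - k • (α + β), k, ?_, ?_, ?_⟩ <;> ext z <;> rw [quadPencil_apply] <;>
    simp only [add_apply, sub_apply, smul_apply, LinearMap.add_apply, LinearMap.sub_apply,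
      LinearMap.smul_apply, QuadraticMap.linMulLin_apply, smul_eq_mul]
  · ring
  · linear_combination -hm' z
  · linear_combination -hk' z

theorem eq_quadPencil {α β γ ξ : V →ₗ[𝕜] 𝕜} (hαβ : LinearIndependent 𝕜 ![ξ - α, ξ - β])
    (hαγ : LinearIndependent 𝕜 ![ξ - α, ξ - γ]) (hβγ : LinearIndependent 𝕜 ![ξ - β, ξ - γ])
    {Q : QuadraticForm 𝕜 V} (hα : ∀ z, (ξ - α) z = 0 → Q z = quadPencil B l k α z)
    (hβ : ∀ z, (ξ - β) z = 0 → Q z = quadPencil B l k β z)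
    (hγ : ∀ z, (ξ - γ) z = 0 → Q z = quadPencil B l k γ z) : Q = quadPencil B l k ξ :=
  sub_eq_zero.1 <| eq_zero_of_vanish_on_three_ker hαβ hαγ hβγ
    (fun z hz => sub_eq_zero.2 <| (hα z hz).trans (quadPencil_congr hz).symm)
    (fun z hz => sub_eq_zero.2 <| (hβ z hz).trans (quadPencil_congr hz).symm)
    (fun z hz => sub_eq_zero.2 <| (hγ z hz).trans (quadPencil_congr hz).symm)

theorem quadPencil_polar_sub {ξ η : V →ₗ[𝕜] 𝕜} {p : V} (h : ξ p = η p) (v : V) :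
    QuadraticMap.polar (quadPencil B l k ξ) p v - QuadraticMap.polar (quadPencil B l k η) p v =
      (l p + 2 * k * η p) * (ξ v - η v) := by
  simp only [QuadraticMap.polar, quadPencil_apply, map_add, h]
  ring

end Forms

/-! ### Analytic functions -/

section Analytic

variable {E : Type*} [NormedAddCommGroup E] [NormedSpace ℝ E]

theorem analyticAt_of_sq {u : E → ℝ} {p : E} (hu : ContinuousAt u p)
    (hsq : AnalyticAt ℝ (fun y => u y ^ 2) p) (hp : u p ≠ 0) : AnalyticAt ℝ u p := by
  have hsqrt : AnalyticAt ℝ Real.sqrt (u p ^ 2 * u p ^ 2) :=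
    (Real.contDiffAt_sqrt (n := ⊤) (by positivity)).analyticAt
  have hprod : AnalyticAt ℝ (fun y => u y ^ 2 * u p ^ 2) p := hsq.fun_mul analyticAt_const
  have hroot : AnalyticAt ℝ (fun y => √(u y ^ 2 * u p ^ 2) / u p) p :=
    (hsqrt.fun_comp (f := fun y => u y ^ 2 * u p ^ 2) hprod).fun_div analyticAt_const hp
  have hpos : ∀ᶠ y in nhds p, 0 < u y * u p :=
    (hu.mul continuousAt_const).eventually (lt_mem_nhds (mul_self_pos.2 hp))
  refine hroot.congr ?_
  filter_upwards [hpos] with y hy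
  rw [← mul_pow, Real.sqrt_sq hy.le, mul_div_cancel_right₀ _ hp]

theorem analyticAt_of_quadratic_eq_zero {a : ℝ} {b c f : E → ℝ} {p : E}
    (hb : AnalyticAt ℝ b p) (hc : AnalyticAt ℝ c p) (hf : ContinuousAt f p)
    (h : ∀ᶠ y in nhds p, a * f y ^ 2 + b y * f y + c y = 0) (hp : 2 * a * f p + b p ≠ 0) :
    AnalyticAt ℝ f p := by
  rcases eq_or_ne a 0 with rfl | ha
  · have hbp : b p ≠ 0 := by simpa using hp
    refine (hc.fun_neg.fun_div hb hbp).congr ?_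
    filter_upwards [h, hb.continuousAt.eventually_ne hbp] with y hy hby
    rw [div_eq_iff hby]
    linear_combination -hy
  · have hdisc : AnalyticAt ℝ (fun y => b y ^ 2 - 4 * a * c y) p :=
      (hb.fun_pow 2).fun_sub (analyticAt_const.fun_mul hc)
    have hroot : AnalyticAt ℝ (fun y => 2 * a * f y + b y) p := by
      refine analyticAt_of_sq ((continuousAt_const.mul hf).add hb.continuousAt)
        (hdisc.congr ?_) hp
      filter_upwards [h] with y hy
      linear_combination (-4 * a) * hy
    refine ((hroot.fun_sub hb).fun_div analyticAt_const
      (mul_ne_zero two_ne_zero ha)).congr (.of_forall fun y => ?_)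
    simp only [add_sub_cancel_right, mul_div_cancel_left₀ _ (mul_ne_zero two_ne_zero ha)]

variable [FiniteDimensional ℝ E]

theorem analyticAt_linearForm (l : E →ₗ[ℝ] ℝ) (y : E) : AnalyticAt ℝ l y :=
  l.toContinuousLinearMap.analyticAt y

theorem analyticAt_quadraticForm (Q : QuadraticForm ℝ E) (y : E) : AnalyticAt ℝ Q y := by
  let B := Q.polarBilin.toContinuousBilinearMap
  have hB : ∀ y, (1 / 2 : ℝ) * B y y = Q y := fun y => by
    have hself : B y y = QuadraticMap.polar Q y y := rfl
    rw [hself, QuadraticMap.polar_self, nsmul_eq_mul]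
    ring
  have hBan : AnalyticAt ℝ (fun y => B y y) y :=
    (B.analyticAt_bilinear (y, y)).comp₂ analyticAt_id analyticAt_id
  exact (analyticAt_const.fun_mul hBan).congr (.of_forall hB)

theorem continuous_quadraticForm (Q : QuadraticForm ℝ E) : Continuous Q :=
  continuous_iff_continuousAt.2 fun y => (analyticAt_quadraticForm Q y).continuousAt

theorem dense_quadraticForm_ne_zero {Q : QuadraticForm ℝ E} (hQ : Q ≠ 0) :
    Dense {y | Q y ≠ 0} := by
  refine interior_eq_empty_iff_dense_compl (s := {y | Q y = 0}).1 (not_nonempty_iff_eq_empty.1 ?_)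
  rintro ⟨y, hy⟩
  have hQan : AnalyticOnNhd ℝ Q univ := fun y _ => analyticAt_quadraticForm Q y
  have h0 := hQan.eqOn_zero_of_preconnected_of_eventuallyEq_zero isPreconnected_univ (mem_univ y)
    (mem_interior_iff_mem_nhds.1 hy)
  exact hQ (QuadraticMap.ext fun z => h0 (mem_univ z))

end Analytic

/-! ### Support functions -/

theorem eventually_add_smul_mem {E : Type*} [AddCommGroup E] [Module ℝ E] [TopologicalSpace E]
    [ContinuousAdd E] [ContinuousSMul ℝ E] {U : Set E} (hU : IsOpen U) {o : E} (ho : o ∈ U)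
    (v : E) : ∀ᶠ t in nhds (0 : ℝ), o + t • v ∈ U :=
  (by fun_prop : ContinuousAt (fun t : ℝ => o + t • v) 0).eventually
    (hU.mem_nhds (by simpa using ho))

section SupportFunction

variable {E F : Type*} [NormedAddCommGroup E] [InnerProductSpace ℝ E]
  [NormedAddCommGroup F] [InnerProductSpace ℝ F] {K L : Set E}

/-- The support function `h_K y = sup {⟪k, y⟫ | k ∈ K}`; the supremum is only meaningful when `K`
is nonempty and bounded. -/
def supportFn (K : Set E) (y : E) : ℝ :=
  sSup ((fun k => ⟪k, y⟫) '' K)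

theorem isGreatest_supportFn (hK : IsCompact K) (hne : K.Nonempty) (y : E) :
    IsGreatest ((fun k => ⟪k, y⟫) '' K) (supportFn K y) :=
  (hK.image (by fun_prop)).isGreatest_sSup (hne.image _)

theorem inner_le_supportFn (hK : IsCompact K) {k : E} (hk : k ∈ K) (y : E) :
    ⟪k, y⟫ ≤ supportFn K y :=
  (isGreatest_supportFn hK ⟨k, hk⟩ y).2 ⟨k, hk, rfl⟩

theorem exists_inner_eq_supportFn (hK : IsCompact K) (hne : K.Nonempty) (y : E) :
    ∃ k ∈ K, ⟪k, y⟫ = supportFn K y :=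
  (isGreatest_supportFn hK hne y).1

theorem supportFn_eq_of_forall_le {k y : E} (hk : k ∈ K) (h : ∀ k' ∈ K, ⟪k', y⟫ ≤ ⟪k, y⟫) :
    supportFn K y = ⟪k, y⟫ :=
  IsGreatest.csSup_eq ⟨⟨k, hk, rfl⟩, forall_mem_image.2 h⟩

theorem continuous_supportFn (hK : IsCompact K) : Continuous (supportFn K) :=
  hK.continuous_sSup (by fun_prop)

theorem supportFn_add_supportFn_neg_pos (hK : IsCompact K) (hint : (interior K).Nonempty)
    {y : E} (hy : y ≠ 0) : 0 < supportFn K y + supportFn K (-y) := by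
  obtain ⟨o, ho⟩ := hint
  obtain ⟨t, ht, htK⟩ := (eventually_add_smul_mem isOpen_interior ho y).exists_gt
  have h₁ := inner_le_supportFn hK (interior_subset htK) y
  have h₂ := inner_le_supportFn hK (interior_subset ho) (-y)
  rw [inner_add_left, real_inner_smul_left] at h₁
  rw [inner_neg_right] at h₂
  have h₃ : 0 < t * ⟪y, y⟫ := mul_pos ht (real_inner_self_pos.2 hy)
  linarith

theorem subset_of_supportFn_le [CompleteSpace E] (hK : IsCompact K) (hL : IsCompact L)
    (hLconv : Convex ℝ L) (hLne : L.Nonempty) (h : ∀ y, supportFn K y ≤ supportFn L y) :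
    K ⊆ L := by
  intro k hk
  by_contra hkL
  obtain ⟨φ, c, hLc, hck⟩ := geometric_hahn_banach_closed_point hLconv hL.isClosed hkL
  set y := (InnerProductSpace.toDual ℝ E).symm φ
  have hφ : ∀ z, φ z = ⟪z, y⟫ := fun z => by
    rw [real_inner_comm, InnerProductSpace.toDual_symm_apply]
  obtain ⟨k', hk', hk'y⟩ := exists_inner_eq_supportFn hL hLne y
  refine (h y).not_gt ?_
  calc supportFn L y = φ k' := by rw [hφ, hk'y]
    _ < φ k := (hLc k' hk').trans hck
    _ ≤ supportFn K y := hφ k ▸ inner_le_supportFn hK hk y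

theorem eq_of_supportFn_eq [CompleteSpace E] (hK : IsCompact K) (hKconv : Convex ℝ K)
    (hKne : K.Nonempty) (hL : IsCompact L) (hLconv : Convex ℝ L) (hLne : L.Nonempty)
    (h : ∀ y, supportFn K y = supportFn L y) : K = L :=
  (subset_of_supportFn_le hK hL hLconv hLne fun y => (h y).le).antisymm
    (subset_of_supportFn_le hL hK hKconv hKne fun y => (h y).ge)

variable [FiniteDimensional ℝ E] [FiniteDimensional ℝ F]

theorem inner_affineMap_eq (f : F →ᵃ[ℝ] E) (b : F) (y : E) :
    ⟪f b, y⟫ = ⟪f 0, y⟫ + ⟪b, LinearMap.adjoint f.linear y⟫ := by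
  rw [LinearMap.adjoint_inner_right, ← inner_add_left]
  simpa [add_comm] using congr(⟪$(f.map_vadd 0 b), y⟫)

theorem supportFn_image_closedBall (f : F →ᵃ[ℝ] E) (y : E) :
    supportFn (f '' closedBall 0 1) y = ⟪f 0, y⟫ + ‖LinearMap.adjoint f.linear y‖ := by
  set w := LinearMap.adjoint f.linear y with hw
  have hmax : ⟪f (‖w‖⁻¹ • w), y⟫ = ⟪f 0, y⟫ + ‖w‖ := by
    rw [inner_affineMap_eq, ← hw, real_inner_smul_left, real_inner_self_eq_norm_mul_norm]
    rcases eq_or_ne ‖w‖ 0 with h | h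
    · simp [h]
    · rw [inv_mul_cancel_left₀ h]
  rw [← hmax]
  refine supportFn_eq_of_forall_le (mem_image_of_mem f ?_) (forall_mem_image.2 fun b hb => ?_)
  · rw [mem_closedBall_zero_iff, norm_smul, norm_inv, norm_norm]
    exact inv_mul_le_one
  · rw [hmax, inner_affineMap_eq, ← hw]
    gcongr
    exact (real_inner_le_norm b w).trans
      (mul_le_of_le_one_left (norm_nonneg w) (mem_closedBall_zero_iff.1 hb))

end SupportFunction

theorem exists_norm_sq_eq_of_posDef {V : Type*} [AddCommGroup V] [Module ℝ V]
    [FiniteDimensional ℝ V] {n : ℕ} (hn : Module.finrank ℝ V = n) {q : QuadraticForm ℝ V}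
    (hq : q.PosDef) : ∃ S : V ≃ₗ[ℝ] EuclideanSpace ℝ (Fin n), ∀ y, ‖S y‖ ^ 2 = q y := by
  subst hn
  obtain ⟨w, ⟨e⟩⟩ := QuadraticForm.equivalent_signType_weighted_sum_squared q
  have hw : ∀ i, w i = 1 := by
    intro i
    have hpos : 0 < (w i : ℝ) := by
      have hqi := hq (e.symm (Pi.single i 1))
        (e.symm.toLinearEquiv.map_ne_zero_iff.2 (Pi.single_ne_zero_iff.2 one_ne_zero))
      rw [e.symm.map_app] at hqi
      simpa [QuadraticMap.weightedSumSquares_apply, Pi.single_apply] using hqi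
    cases hwi : w i <;> rw [hwi] at hpos
    · exact absurd hpos (by simp)
    · exact absurd hpos (by simp)
    · rfl
  refine ⟨e.toLinearEquiv.trans (WithLp.linearEquiv 2 ℝ _).symm, fun y => ?_⟩
  rw [← e.map_app y, EuclideanSpace.norm_sq_eq, QuadraticMap.weightedSumSquares_apply]
  refine Finset.sum_congr rfl fun i _ => ?_
  rw [hw, Real.norm_eq_abs, sq_abs, pow_two]
  exact (one_smul ℝ _).symm

theorem isEllipsoid_of_supportFn_eq {n : ℕ} {K : Set (EuclideanSpace ℝ (Fin n))}
    (hK : IsConvexBody K) {a : EuclideanSpace ℝ (Fin n)}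
    {q : QuadraticForm ℝ (EuclideanSpace ℝ (Fin n))} (hq : q.PosDef)
    (h : ∀ y, supportFn K y = ⟪a, y⟫ + √(q y)) : IsEllipsoid K := by
  obtain ⟨S, hS⟩ := exists_norm_sq_eq_of_posDef finrank_euclideanSpace_fin hq
  let A : EuclideanSpace ℝ (Fin n) ≃ₗ[ℝ] EuclideanSpace ℝ (Fin n) :=
    .ofLinearMap (LinearMap.adjoint S.toLinearMap) (LinearMap.adjoint S.symm.toLinearMap)
    (by rw [← LinearMap.adjoint_comp]; simp) (by rw [← LinearMap.adjoint_comp]; simp)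
  let f := A.toAffineEquiv.trans (AffineEquiv.constVAdd ℝ _ a)
  have hcont : Continuous f := AffineMap.continuous_of_finiteDimensional f.toAffineMap
  have hlin : LinearMap.adjoint f.toAffineMap.linear = S.toLinearMap :=
    LinearMap.adjoint_adjoint _
  refine ⟨f, eq_of_supportFn_eq hK.1 hK.2.1 (hK.2.2.mono interior_subset)
    ((isCompact_closedBall 0 1).image hcont)
    ((convex_closedBall 0 1).affine_image f.toAffineMap)
    ((nonempty_closedBall.2 zero_le_one).image f) fun y => ?_⟩
  calc supportFn K y = ⟪a, y⟫ + ‖S y‖ := by rw [h, ← hS, Real.sqrt_sq (norm_nonneg _)]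
    _ = ⟪f.toAffineMap 0, y⟫ + ‖LinearMap.adjoint f.toAffineMap.linear y‖ := by
      rw [hlin]
      simp [f]
    _ = supportFn (f '' closedBall 0 1) y := (supportFn_image_closedBall f.toAffineMap y).symm

/-! ### Chords of convex sets -/

section Collinear

variable {𝕜 V : Type*} [Field 𝕜] [AddCommGroup V] [Module 𝕜 V] {x a b : V}

theorem linearIndependent_sub_sub_iff_not_collinear :
    LinearIndependent 𝕜 ![x - a, x - b] ↔ ¬Collinear 𝕜 {x, a, b} := by
  rw [← affineIndependent_iff_not_collinear_set,
    affineIndependent_iff_linearIndependent_vsub 𝕜 _ (0 : Fin 3),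
    ← linearIndependent_equiv (finSuccAboveEquiv (0 : Fin 3))]
  have h : ((fun i : {i : Fin 3 // i ≠ 0} => (![x, a, b] i : V) -ᵥ ![x, a, b] 0) ∘
      finSuccAboveEquiv (0 : Fin 3)) = ![-(x - a), -(x - b)] := by
    ext i
    fin_cases i <;> simp [finSuccAboveEquiv]
  rw [h, LinearIndependent.pair_neg_left_iff, LinearIndependent.pair_neg_right_iff]

theorem exists_eq_add_smul_of_collinear (hab : a ≠ b) (h : Collinear 𝕜 {x, a, b}) :
    ∃ r : 𝕜, x = a + r • (b - a) := by
  obtain ⟨r, hr⟩ := mem_affineSpan_pair_iff_exists_lineMap_eq.1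
    (h.mem_affineSpan_of_mem_of_ne (p₁ := a) (p₂ := b) (p₃ := x)
      (by simp) (by simp) (by simp) hab)
  exact ⟨r, by rw [← hr, AffineMap.lineMap_apply, vsub_eq_sub, vadd_eq_add, add_comm]⟩

theorem apply_eq_of_collinear {φ : V →ₗ[𝕜] 𝕜} {x' : V} (hab : a ≠ b) (hxx' : x ≠ x')
    (hx : Collinear 𝕜 {x, a, b}) (hx' : Collinear 𝕜 {x', a, b}) (hφ : φ x = φ x') :
    φ a = φ x := by
  have hmem : ∀ {z}, Collinear 𝕜 {z, a, b} → z ∈ line[𝕜, a, b] := fun hz =>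
    hz.mem_affineSpan_of_mem_of_ne (by simp) (by simp) (by simp) hab
  obtain ⟨r, hr⟩ := exists_eq_add_smul_of_collinear hxx' (collinear_triple_of_mem_affineSpan_pair
    (left_mem_affineSpan_pair 𝕜 a b) (hmem hx) (hmem hx'))
  rw [hr, map_add, map_smul, map_sub, hφ, sub_self, smul_zero, add_zero]

theorem not_collinear_add_smul_add_smul {u v : V} (huv : LinearIndependent 𝕜 ![u, v])
    {α β γ δ : 𝕜} (hdet : α * δ ≠ β * γ) :
    ¬Collinear 𝕜 {x, x + (α • u + β • v), x + (γ • u + δ • v)} := by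
  rw [← linearIndependent_sub_sub_iff_not_collinear, sub_add_cancel_left, sub_add_cancel_left,
    LinearIndependent.pair_neg_left_iff, LinearIndependent.pair_neg_right_iff,
    LinearIndependent.pair_add_smul_add_smul_iff]
  exact ⟨huv, hdet⟩

theorem not_collinear_of_pos [LinearOrder 𝕜] [IsStrictOrderedRing 𝕜] {u v : V}
    (huv : LinearIndependent 𝕜 ![u, v]) {α β γ δ τ : 𝕜} (hα : 0 < α) (hβ : 0 < β) (hγ : 0 < γ)
    (hδ : 0 < δ) (hτ : 0 < τ) {g c : V} (ha : a = g + (-α • u + β • v))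
    (hb : b = g + (-γ • u + -δ • v)) (hc : c = g + (τ • u + (0 : 𝕜) • v)) :
    ¬Collinear 𝕜 {g, a, b} ∧ ¬Collinear 𝕜 {g, a, c} ∧ ¬Collinear 𝕜 {g, b, c} ∧
      ¬Collinear 𝕜 {c, a, b} := by
  have hac : a = c + (-(α + τ) • u + β • v) := by rw [ha, hc]; module
  have hbc : b = c + (-(γ + τ) • u + -δ • v) := by rw [hb, hc]; module
  refine ⟨?_, ?_, ?_, ?_⟩
  · rw [ha, hb]
    refine not_collinear_add_smul_add_smul huv (ne_of_gt ?_)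
    linear_combination mul_pos hα hδ + mul_pos hβ hγ
  · rw [ha, hc]
    refine not_collinear_add_smul_add_smul huv (ne_of_lt ?_)
    linear_combination mul_pos hβ hτ
  · rw [hb, hc]
    refine not_collinear_add_smul_add_smul huv (ne_of_gt ?_)
    linear_combination mul_pos hδ hτ
  · rw [hac, hbc]
    refine not_collinear_add_smul_add_smul huv (ne_of_gt ?_)
    linear_combination mul_pos (add_pos hα hτ) hδ + mul_pos hβ (add_pos hγ hτ)

theorem collinear_add_smul_sub (o x : V) (s : 𝕜) : Collinear 𝕜 {o, x, o + s • (o - x)} := by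
  refine (collinear_iff_of_mem (p₀ := o) (by simp)).2 ⟨o - x, ?_⟩
  rintro y (rfl | rfl | rfl)
  · exact ⟨0, by simp⟩
  · exact ⟨-1, by simp⟩
  · exact ⟨s, by simp [add_comm]⟩

end Collinear

section Chords

variable {E : Type*} [NormedAddCommGroup E] [NormedSpace ℝ E] {G : Set E} {o : E}

theorem exists_add_smul_mem_frontier (hG : IsBounded G) (ho : o ∈ interior G) {v : E}
    (hv : v ≠ 0) : ∃ t : ℝ, 0 < t ∧ o + t • v ∈ frontier G := by
  by_contra! h
  have hcover : (fun t : ℝ => o + t • v) '' Ici 0 ⊆ interior G ∪ (closure G)ᶜ := by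
    rintro _ ⟨t, ht, rfl⟩
    rcases (mem_Ici.1 ht).eq_or_lt with rfl | ht
    · exact .inl (by simpa using ho)
    · by_cases hcl : o + t • v ∈ closure G
      · exact .inl (not_not.1 fun hint => h t ht ⟨hcl, hint⟩)
      · exact .inr hcl
  have hray : (fun t : ℝ => o + t • v) '' Ici 0 ⊆ interior G :=
    (isPreconnected_Ici.image _ (by fun_prop)).subset_left_of_subset_union isOpen_interior
      isClosed_closure.isOpen_compl
      (disjoint_compl_right_iff_subset.2 (interior_subset.trans subset_closure)) hcover
      ⟨o, ⟨0, by simp, by simp⟩, ho⟩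
  obtain ⟨R, hR⟩ := hG.exists_norm_le
  have hR0 : 0 ≤ R := (norm_nonneg o).trans (hR o (interior_subset ho))
  have hv' : 0 < ‖v‖ := norm_pos_iff.2 hv
  set t := (R + ‖o‖ + 1) / ‖v‖ with ht
  have ht0 : 0 ≤ t := by positivity
  have htv : ‖t • v‖ = R + ‖o‖ + 1 := by
    rw [norm_smul, Real.norm_of_nonneg ht0, ht, div_mul_cancel₀ _ hv'.ne']
  have hle : ‖t • v‖ ≤ ‖o + t • v‖ + ‖o‖ := by simpa using norm_sub_le (o + t • v) o
  linarith [hR _ (interior_subset (hray ⟨t, ht0, rfl⟩))]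

theorem subsingleton_pos_add_smul_mem_frontier (hG : Convex ℝ G) (ho : o ∈ interior G) (v : E) :
    {t : ℝ | 0 < t ∧ o + t • v ∈ frontier G}.Subsingleton := by
  have hlt : ∀ {s t : ℝ}, 0 < s → o + s • v ∈ frontier G → o + t • v ∈ frontier G → t ≤ s := by
    intro s t hs hsG htG
    by_contra! hst
    refine hsG.2 (hG.openSegment_interior_closure_subset_interior ho htG.1 ?_)
    refine ⟨1 - s / t, s / t, sub_pos.2 ((div_lt_one (hs.trans hst)).2 hst),
      div_pos hs (hs.trans hst), sub_add_cancel _ _, ?_⟩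
    have ht : s / t * t = s := div_mul_cancel₀ s (hs.trans hst).ne'
    rw [smul_add, smul_smul, ht]
    module
  exact fun s hs t ht => (hlt ht.1 ht.2 hs.2).antisymm (hlt hs.1 hs.2 ht.2)

theorem finite_frontier_inter_line (hG : Convex ℝ G) (ho : o ∈ interior G) {a b : E}
    (hab : a ≠ b) (hoab : Collinear ℝ {o, a, b}) :
    {x ∈ frontier G | Collinear ℝ {x, a, b}}.Finite := by
  have hfin : ∀ v, ((fun t : ℝ => o + t • v) '' {t | 0 < t ∧ o + t • v ∈ frontier G}).Finite :=
    fun v => (subsingleton_pos_add_smul_mem_frontier hG ho v).finite.image _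
  refine ((hfin (b - a)).union (hfin (a - b))).subset ?_
  rintro x ⟨hxG, hx⟩
  obtain ⟨r, rfl⟩ := exists_eq_add_smul_of_collinear hab hoab
  obtain ⟨s, rfl⟩ := exists_eq_add_smul_of_collinear hab hx
  rcases lt_trichotomy r s with h | rfl | h
  · have hs : a + s • (b - a) = a + r • (b - a) + (s - r) • (b - a) := by module
    exact .inl ⟨s - r, ⟨sub_pos.2 h, hs ▸ hxG⟩, hs.symm⟩
  · exact absurd ho hxG.2
  · have hs : a + s • (b - a) = a + r • (b - a) + (r - s) • (a - b) := by module
    exact .inr ⟨r - s, ⟨sub_pos.2 h, hs ▸ hxG⟩, hs.symm⟩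

/-- The triangle `a b c` is inscribed in `G`, no side of it passes through `g` and no vertex is
collinear with `g` and another vertex; the sides `c a` and `c b` are not contained in `∂G`. -/
structure IsBaseTriangle (G : Set E) (g a b c : E) : Prop where
  mem_a : a ∈ frontier G
  mem_b : b ∈ frontier G
  mem_c : c ∈ frontier G
  not_collinear_g_a_b : ¬Collinear ℝ {g, a, b}
  not_collinear_g_a_c : ¬Collinear ℝ {g, a, c}
  not_collinear_g_b_c : ¬Collinear ℝ {g, b, c}
  not_collinear_c_a_b : ¬Collinear ℝ {c, a, b}
  exists_mem_c_a : ∃ o ∈ interior G, Collinear ℝ {o, c, a}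
  exists_mem_c_b : ∃ o ∈ interior G, Collinear ℝ {o, c, b}

theorem exists_isBaseTriangle (hG : IsBounded G) {g u v : E} (hg : g ∈ interior G)
    (huv : LinearIndependent ℝ ![u, v]) {φ : E →ₗ[ℝ] ℝ} (hu : φ u = 0) (hv : φ v = 0) :
    ∃ a b c, IsBaseTriangle G g a b c ∧ φ a = φ g ∧ φ b = φ g ∧ φ c = φ g := by
  obtain ⟨t, ht, hc⟩ := exists_add_smul_mem_frontier hG hg (huv.ne_zero 0)
  obtain ⟨ε, hε, ho, ho'⟩ := ((eventually_add_smul_mem isOpen_interior hg v).and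
    (eventually_add_smul_mem isOpen_interior hg (-v))).exists_gt
  have hne : ∀ δ : ℝ, g + δ • v - (g + t • u) ≠ 0 := by
    intro δ h
    refine ht.ne' (neg_eq_zero.1 (LinearIndependent.pair_iff.1 huv (-t) δ ?_).1)
    rw [← h]
    module
  rw [smul_neg, ← neg_smul] at ho'
  obtain ⟨s, hs, ha⟩ := exists_add_smul_mem_frontier hG ho (hne ε)
  obtain ⟨r, hr, hb⟩ := exists_add_smul_mem_frontier hG ho' (hne (-ε))
  have hca := collinear_add_smul_sub (g + ε • v) (g + t • u) s
  have hcb := collinear_add_smul_sub (g + (-ε) • v) (g + t • u) r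
  set c := g + t • u with hc_def
  set a := g + ε • v + s • (g + ε • v - c) with ha_def
  set b := g + (-ε) • v + r • (g + (-ε) • v - c) with hb_def
  have hag : a = g + (-(s * t) • u + (ε * (1 + s)) • v) := by rw [ha_def, hc_def]; module
  have hbg : b = g + (-(r * t) • u + -(ε * (1 + r)) • v) := by rw [hb_def, hc_def]; module
  have hcg : c = g + (t • u + (0 : ℝ) • v) := by rw [hc_def]; module
  obtain ⟨hgab, hgac, hgbc, hcab⟩ := not_collinear_of_pos huv (mul_pos hs ht) (by positivity)
    (mul_pos hr ht) (by positivity) ht hag hbg hcg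
  refine ⟨a, b, c, ⟨ha, hb, hc, hgab, hgac, hgbc, hcab, ⟨_, ho, hca⟩, ⟨_, ho', hcb⟩⟩, ?_, ?_, ?_⟩
  · simp [hag, hu, hv]
  · simp [hbg, hu, hv]
  · simp [hcg, hu]

end Chords

section SupportingHyperplanes

variable {E : Type*} [NormedAddCommGroup E] [InnerProductSpace ℝ E] {K G : Set E}

theorem exists_ne_zero_inner_eq_zero (hE : 3 ≤ Module.finrank ℝ E) (p y : E) :
    ∃ v ≠ 0, ⟪p, v⟫ = 0 ∧ ⟪y, v⟫ = 0 := by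
  have : FiniteDimensional ℝ E := Module.finite_of_finrank_pos (by lia)
  set S := Submodule.span ℝ (range ![p, y])
  have hS : Module.finrank ℝ S ≤ 2 := finrank_range_le_card ![p, y]
  have hsum := S.finrank_add_finrank_orthogonal
  have hbot : Sᗮ ≠ ⊥ := fun h => by
    rw [h, finrank_bot] at hsum
    lia
  obtain ⟨v, hv, hv0⟩ := Submodule.exists_mem_ne_zero_of_ne_bot hbot
  rw [Submodule.mem_orthogonal] at hv
  exact ⟨v, hv0, hv p (Submodule.subset_span ⟨0, rfl⟩), hv y (Submodule.subset_span ⟨1, rfl⟩)⟩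

theorem exists_linearIndependent_pair_inner_eq_zero (hE : 3 ≤ Module.finrank ℝ E) (p : E) :
    ∃ u v, LinearIndependent ℝ ![u, v] ∧ ⟪p, u⟫ = 0 ∧ ⟪p, v⟫ = 0 := by
  obtain ⟨u, hu, hpu, -⟩ := exists_ne_zero_inner_eq_zero hE p p
  obtain ⟨v, hv, hpv, huv⟩ := exists_ne_zero_inner_eq_zero hE p u
  refine ⟨u, v, LinearIndependent.pair_iff.2 fun s t h => ?_, hpu, hpv⟩
  have hs := congr(⟪u, $h⟫)
  have ht := congr(⟪v, $h⟫)
  rw [inner_add_right, inner_smul_right, inner_smul_right, inner_zero_right, huv, mul_zero,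
    add_zero] at hs
  rw [inner_add_right, inner_smul_right, inner_smul_right, inner_zero_right,
    real_inner_comm, huv, mul_zero, zero_add] at ht
  exact ⟨(mul_eq_zero.1 hs).resolve_right (inner_self_ne_zero.2 hu),
    (mul_eq_zero.1 ht).resolve_right (inner_self_ne_zero.2 hv)⟩

/-- Upper semicontinuity of the set of contact points. -/
theorem eventually_exists_contact_dist_lt (hK : IsCompact K) (p : E) {ρ : ℝ} (hρ : 0 < ρ) :
    ∀ᶠ y in nhds p, ∀ g' ∈ K, ⟪g', y⟫ = supportFn K y →
      ∃ g ∈ K, ⟪g, p⟫ = supportFn K p ∧ dist g' g < ρ := by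
  set C := {g ∈ K | ⟪g, p⟫ = supportFn K p}
  have hlt : ∀ᶠ y in nhds p, ∀ k ∈ K \ thickening ρ C, ⟪k, y⟫ < supportFn K y := by
    refine (hK.diff isOpen_thickening).eventually_forall_of_forall_eventually fun k hk => ?_
    have hkp : ⟪k, p⟫ < supportFn K p := (inner_le_supportFn hK hk.1 p).lt_of_ne fun h =>
      hk.2 (self_subset_thickening hρ C ⟨hk.1, h⟩)
    have hcont := continuous_supportFn hK
    have hc₁ : ContinuousAt (fun z : E × E => ⟪z.2, z.1⟫) (p, k) := by fun_prop
    have hc₂ : ContinuousAt (fun z : E × E => supportFn K z.1) (p, k) := by fun_prop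
    exact hc₁.eventually_lt hc₂ hkp
  filter_upwards [hlt] with y hy g' hg' hg'y
  have hmem : g' ∈ thickening ρ C := by
    by_contra h
    exact (hy g' ⟨hg', h⟩).ne hg'y
  obtain ⟨g, hg, hd⟩ := mem_thickening_iff.1 hmem
  exact ⟨g, hg.1, hg.2, hd⟩

theorem exists_inner_eq_inner_eq_of_le {p y g g' : E} (hpy : 0 < ⟪p, y⟫)
    (hp : ⟪g', p⟫ ≤ ⟪g, p⟫) (hy : ⟪g, y⟫ ≤ ⟪g', y⟫) :
    ∃ q, ⟪q, p⟫ = ⟪g, p⟫ ∧ ⟪q, y⟫ = ⟪g', y⟫ ∧ dist q g ≤ dist g' g := by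
  have hpp : 0 < ⟪p, p⟫ := real_inner_self_pos.2 fun h => by simp [h] at hpy
  set r := ⟪g - g', p⟫ / ⟪p, p⟫ with hr
  have hr0 : 0 ≤ r := div_nonneg (by rw [inner_sub_left]; linarith) hpp.le
  set d := g' - g + r • p with hd
  have hdp : ⟪d, p⟫ = 0 := by
    rw [hd, inner_add_left, real_inner_smul_left, hr, div_mul_cancel₀ _ hpp.ne',
      ← inner_add_left, sub_add_sub_cancel', sub_self, inner_zero_left]
  have hdy : ⟪g' - g, y⟫ ≤ ⟪d, y⟫ := by
    rw [hd, inner_add_left, real_inner_smul_left]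
    linarith [mul_nonneg hr0 hpy.le]
  have hδ : 0 ≤ ⟪g' - g, y⟫ := by rw [inner_sub_left]; linarith
  have hdn : ‖d‖ ≤ ‖g' - g‖ := by
    have hsq : ⟪d, d⟫ = ⟪d, g' - g⟫ := by
      conv_lhs => rw [hd, inner_add_right, real_inner_smul_right, ← hd, hdp, mul_zero, add_zero]
    have hle := real_inner_le_norm d (g' - g)
    rw [← hsq, real_inner_self_eq_norm_mul_norm] at hle
    rcases (norm_nonneg d).eq_or_lt with h | h
    · exact h ▸ norm_nonneg _
    · exact le_of_mul_le_mul_left hle h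
  refine ⟨g + (⟪g' - g, y⟫ / ⟪d, y⟫) • d, ?_, ?_, ?_⟩
  · rw [inner_add_left, real_inner_smul_left, hdp, mul_zero, add_zero]
  · rw [inner_add_left, real_inner_smul_left, div_mul_cancel_of_imp fun h => by linarith,
      inner_sub_left, add_sub_cancel]
  · rw [dist_self_add_left, norm_smul, dist_eq_norm,
      Real.norm_of_nonneg (div_nonneg hδ (hδ.trans hdy))]
    exact (mul_le_of_le_one_left (norm_nonneg d)
      (div_le_one_of_le₀ hdy (hδ.trans hdy))).trans hdn

theorem eventually_exists_mem_interior_supporting (hK : IsCompact K) (hne : K.Nonempty)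
    (hKG : K ⊆ interior G) {p : E} (hp : p ≠ 0) :
    ∀ᶠ y in nhds p, ∃ q ∈ interior G, ⟪q, p⟫ = supportFn K p ∧ ⟪q, y⟫ = supportFn K y := by
  obtain ⟨ρ, hρ, hρG⟩ := hK.exists_cthickening_subset_open isOpen_interior hKG
  have hpos : ∀ᶠ y in nhds p, 0 < ⟪p, y⟫ :=
    (by fun_prop : ContinuousAt (fun y => ⟪p, y⟫) p).eventually
      (lt_mem_nhds (real_inner_self_pos.2 hp))
  filter_upwards [eventually_exists_contact_dist_lt hK p hρ, hpos] with y hy hpy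
  obtain ⟨g', hg', hg'y⟩ := exists_inner_eq_supportFn hK hne y
  obtain ⟨g, hg, hgp, hd⟩ := hy g' hg' hg'y
  obtain ⟨q, hqp, hqy, hqd⟩ := exists_inner_eq_inner_eq_of_le hpy
    (hgp ▸ inner_le_supportFn hK hg' p) (hg'y ▸ inner_le_supportFn hK hg y)
  exact ⟨q, hρG (mem_cthickening_of_dist_le q g ρ K hg (hqd.trans hd.le)), hqp.trans hgp,
    hqy.trans hg'y⟩

end SupportingHyperplanes

/-! ### The dual quadratic form of an ellipsoidal cone -/

section Rays

variable {E : Type*} [NormedAddCommGroup E] [InnerProductSpace ℝ E] {K L : Set E} {x : E}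

theorem inner_eq_iff_of_sub_eq_smul {k l z : E} {t : ℝ} (ht : t ≠ 0) (h : k - x = t • (l - x)) :
    ⟪k, z⟫ = ⟪x, z⟫ ↔ ⟪l, z⟫ = ⟪x, z⟫ := by
  rw [← sub_eq_zero, ← inner_sub_left, h, real_inner_smul_left, mul_eq_zero, or_iff_right ht,
    inner_sub_left, sub_eq_zero]

/-- Every open ray issuing from `x` that meets `K` also meets `L`. -/
def RaySubset (x : E) (K L : Set E) : Prop :=
  ∀ k ∈ K, ∃ l ∈ L, ∃ t : ℝ, 0 < t ∧ k - x = t • (l - x)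

theorem RaySubset.supportFn_eq_inner (hKL : RaySubset x K L) (hLK : RaySubset x L K)
    (hL : IsCompact L) (hLne : L.Nonempty) {z : E} (h : supportFn L z = ⟪x, z⟫) :
    supportFn K z = ⟪x, z⟫ := by
  obtain ⟨l, hl, hlz⟩ := exists_inner_eq_supportFn hL hLne z
  obtain ⟨k, hk, t, ht, hkl⟩ := hLK l hl
  have hkz : ⟪k, z⟫ = ⟪x, z⟫ := (inner_eq_iff_of_sub_eq_smul ht.ne' hkl).1 (hlz.trans h)
  refine hkz ▸ supportFn_eq_of_forall_le hk fun k' hk' => ?_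
  obtain ⟨l', hl', t', ht', hkl'⟩ := hKL k' hk'
  have hl'z : ⟪l' - x, z⟫ ≤ 0 := by
    rw [inner_sub_left, sub_nonpos, ← h]
    exact inner_le_supportFn hL hl' z
  rw [hkz, ← sub_nonpos, ← inner_sub_left, hkl', real_inner_smul_left]
  exact mul_nonpos_of_nonneg_of_nonpos ht'.le hl'z

theorem RaySubset.supportFn_eq_inner_iff (hKL : RaySubset x K L) (hLK : RaySubset x L K)
    (hK : IsCompact K) (hKne : K.Nonempty) (hL : IsCompact L) (hLne : L.Nonempty) {z : E} :
    supportFn K z = ⟪x, z⟫ ↔ supportFn L z = ⟪x, z⟫ :=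
  ⟨hLK.supportFn_eq_inner hKL hK hKne, hKL.supportFn_eq_inner hLK hL hLne⟩

end Rays

theorem forall_pos_of_le_mul {X : Type*} [TopologicalSpace X] {S : Set X} (hS : IsPreconnected S)
    {φ ψ : X → ℝ} (hφ : Continuous φ) (hψ : Continuous ψ) (hψ₀ : ∀ k ∈ S, 0 < ψ k) {R : ℝ}
    (hR : 0 ≤ R) (hle : ∀ k ∈ S, 0 < φ k → ψ k ≤ R * φ k) {k₀ : X} (hk₀ : k₀ ∈ S)
    (hφ₀ : 0 < φ k₀) : ∀ k ∈ S, 0 < φ k := by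
  intro k hk
  by_contra! hneg
  have h₀ : (0 : ℝ) ∈ Icc (R * φ k - ψ k / 2) (R * φ k₀ - ψ k₀ / 2) :=
    ⟨by linarith [mul_nonpos_of_nonneg_of_nonpos hR hneg, hψ₀ k hk],
      by linarith [hle k₀ hk₀ hφ₀, hψ₀ k₀ hk₀]⟩
  obtain ⟨k₁, hk₁, (h₁ : R * φ k₁ - ψ k₁ / 2 = 0)⟩ := hS.intermediate_value hk hk₀
    (f := fun k => R * φ k - ψ k / 2) (by fun_prop) h₀
  have hφ₁ : 0 < φ k₁ := pos_of_mul_pos_right (by linarith [hψ₀ k₁ hk₁]) hR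
  linarith [hle k₁ hk₁ hφ₁, hψ₀ k₁ hk₁]

section Slice

variable {n : ℕ} {K : Set (EuclideanSpace ℝ (Fin n))} {x u : EuclideanSpace ℝ (Fin n)} {c : ℝ}

theorem raySubset_cone_slice (hu : ⟪u, x⟫ ≠ c) : RaySubset x (cone K x ∩ {p | ⟪u, p⟫ = c}) K := by
  rintro _ ⟨⟨k, hk, t, ht, rfl⟩, hc⟩
  refine ⟨k, hk, t, ht.lt_of_ne ?_, add_sub_cancel_left _ _⟩
  rintro rfl
  exact hu (by simpa using hc)

theorem raySubset_slice_of_isBounded (hK : IsPreconnected K) (hx : x ∉ K) (hu : ⟪u, x⟫ ≠ c)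
    (hne : (cone K x ∩ {p | ⟪u, p⟫ = c}).Nonempty)
    (hbdd : IsBounded (cone K x ∩ {p | ⟪u, p⟫ = c})) :
    RaySubset x K (cone K x ∩ {p | ⟪u, p⟫ = c}) := by
  have hd : c - ⟪u, x⟫ ≠ 0 := sub_ne_zero.2 hu.symm
  set φ : EuclideanSpace ℝ (Fin n) → ℝ := fun k => ⟪u, k - x⟫ / (c - ⟪u, x⟫) with hφ
  have hmem : ∀ k ∈ K, 0 < φ k → x + (φ k)⁻¹ • (k - x) ∈ cone K x ∩ {p | ⟪u, p⟫ = c} := by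
    intro k hk hpos
    refine ⟨⟨k, hk, (φ k)⁻¹, (inv_pos.2 hpos).le, rfl⟩, ?_⟩
    have h₀ : ⟪u, k - x⟫ ≠ 0 := fun h => by simp [hφ, h] at hpos
    rw [Set.mem_ofPred_eq, inner_add_right, real_inner_smul_right, inv_div, div_mul_cancel₀ _ h₀,
      add_sub_cancel]
  obtain ⟨R, hR⟩ := hbdd.subset_closedBall x
  have hle : ∀ k ∈ K, 0 < φ k → ‖k - x‖ ≤ R * φ k := by
    intro k hk hpos
    have h := hR (hmem k hk hpos)
    rwa [mem_closedBall, dist_self_add_left, norm_smul, norm_inv, Real.norm_of_nonneg hpos.le,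
      inv_mul_le_iff₀ hpos, mul_comm] at h
  obtain ⟨s, hs⟩ := hne
  have hR0 : 0 ≤ R := dist_nonneg.trans (hR hs)
  obtain ⟨k₀, hk₀, t, ht, hsk⟩ := raySubset_cone_slice hu s hs
  have hφ₀ : 0 < φ k₀ := by
    have h : t * φ k₀ = 1 := by
      rw [hφ, ← mul_div_assoc, ← real_inner_smul_right, ← hsk, inner_sub_right, hs.2, div_self hd]
    exact pos_of_mul_pos_right (h ▸ one_pos) ht.le
  have hpos : ∀ k ∈ K, 0 < φ k :=
    forall_pos_of_le_mul (ψ := fun k => ‖k - x‖) hK (by fun_prop) (by fun_prop)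
      (fun k hk => norm_pos_iff.2 (sub_ne_zero.2 fun h => hx (h ▸ hk))) hR0 hle hk₀ hφ₀
  exact fun k hk => ⟨_, hmem k hk (hpos k hk), φ k, hpos k hk, by
    rw [add_sub_cancel_left, smul_inv_smul₀ (hpos k hk).ne']⟩

end Slice

section TangentForm

variable {E F : Type*} [NormedAddCommGroup E] [InnerProductSpace ℝ E]
  [NormedAddCommGroup F] [InnerProductSpace ℝ F] {K : Set E} {x : E} {Q : QuadraticForm ℝ E}

/-- `Q` is a dual quadratic form of the cone with apex `x` circumscribed about `K`: it vanishes
exactly at the normals `z` of the supporting hyperplanes of `K` through `x`, and its polar at such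
a normal is proportional to the generating ray through any point of contact. -/
structure IsTangentForm (K : Set E) (x : E) (Q : QuadraticForm ℝ E) : Prop where
  eq_zero_iff : ∀ z, Q z = 0 ↔ supportFn K z = ⟪x, z⟫ ∨ supportFn K (-z) = ⟪x, -z⟫
  exists_polar_eq : ∀ p ≠ 0, supportFn K p = ⟪x, p⟫ → ∀ g ∈ K, ⟪g, p⟫ = ⟪x, p⟫ →
    ∃ c ≠ 0, ∀ v, QuadraticMap.polar Q p v = c * ⟪g - x, v⟫

/-- `Q` is a dual quadratic form of the cone with apex `x` over `K`, where `x` lies on the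
supporting hyperplane of `K` with normal `p`, scaled so that its polar at `p` is `2 (g - x)`. -/
structure IsNormalizedTangentForm (K : Set E) (p g x : E) (Q : QuadraticForm ℝ E) : Prop
    extends IsTangentForm K x Q where
  supportFn_eq : supportFn K p = ⟪x, p⟫
  polar_eq : ∀ v, QuadraticMap.polar Q p v = 2 * ⟪g - x, v⟫

theorem IsTangentForm.exists_isNormalizedTangentForm (hQ : IsTangentForm K x Q) {p g : E}
    (hp : p ≠ 0) (hxp : supportFn K p = ⟪x, p⟫) (hg : g ∈ K) (hgp : ⟪g, p⟫ = ⟪x, p⟫) :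
    ∃ Q', IsNormalizedTangentForm K p g x Q' := by
  obtain ⟨c, hc, hpol⟩ := hQ.exists_polar_eq p hp hxp g hg hgp
  have hsmul : ∀ p v, QuadraticMap.polar ((2 / c) • Q) p v = 2 / c * QuadraticMap.polar Q p v :=
    fun p v => by rw [FunLike.coe_smul, QuadraticMap.polar_smul, smul_eq_mul]
  refine ⟨(2 / c) • Q, ⟨fun z => ?_, fun p' hp' hxp' g' hg' hgp' => ?_⟩, hxp, fun v => ?_⟩
  · rw [← hQ.eq_zero_iff, smul_apply, smul_eq_mul, mul_eq_zero,
      or_iff_right (div_ne_zero two_ne_zero hc)]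
  · obtain ⟨c', hc', hpol'⟩ := hQ.exists_polar_eq p' hp' hxp' g' hg' hgp'
    exact ⟨2 / c * c', mul_ne_zero (div_ne_zero two_ne_zero hc) hc', fun v => by
      rw [hsmul, hpol', mul_assoc]⟩
  · rw [hsmul, hpol, ← mul_assoc, div_mul_cancel₀ _ hc]

theorem norm_smul_eq_of_inner_eq_norm {b w : F} (hb : ‖b‖ ≤ 1) (h : ⟪b, w⟫ = ‖w‖) :
    ‖w‖ • b = w := by
  have hsq : ‖‖w‖ • b - w‖ ^ 2 ≤ 0 := by
    calc ‖‖w‖ • b - w‖ ^ 2 = ‖w‖ ^ 2 * (‖b‖ ^ 2 - 1) := by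
          rw [norm_sub_sq_real, norm_smul, real_inner_smul_left, h, norm_norm]
          ring
      _ ≤ 0 := mul_nonpos_of_nonneg_of_nonpos (sq_nonneg _)
          (sub_nonpos.2 (pow_le_one₀ (norm_nonneg b) hb))
  exact sub_eq_zero.1 (norm_eq_zero.1 ((sq_nonpos_iff _).1 hsq))

variable [FiniteDimensional ℝ E] [FiniteDimensional ℝ F]

/-- The dual quadratic form `y ↦ ‖T y‖² - ⟪f 0 - x, y⟫²` of the cone with apex `x` over the
ellipsoid `f '' closedBall 0 1`, where `T` is the adjoint of the linear part of `f`. -/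
def dualConeForm (f : F →ᵃ[ℝ] E) (x : E) : QuadraticForm ℝ E :=
  (LinearMap.BilinMap.toQuadraticMap (innerₗ F)).comp (LinearMap.adjoint f.linear) -
    QuadraticMap.linMulLin (innerₗ E (f 0 - x)) (innerₗ E (f 0 - x))

theorem dualConeForm_apply (f : F →ᵃ[ℝ] E) (x y : E) :
    dualConeForm f x y = ‖LinearMap.adjoint f.linear y‖ ^ 2 - ⟪f 0 - x, y⟫ ^ 2 := by
  rw [← real_inner_self_eq_norm_sq, pow_two]
  rfl

theorem polar_dualConeForm (f : F →ᵃ[ℝ] E) (x y v : E) :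
    QuadraticMap.polar (dualConeForm f x) y v =
      2 * (⟪LinearMap.adjoint f.linear y, LinearMap.adjoint f.linear v⟫ -
        ⟪f 0 - x, y⟫ * ⟪f 0 - x, v⟫) := by
  simp only [QuadraticMap.polar, dualConeForm_apply, map_add, inner_add_right, norm_add_sq_real]
  ring

theorem supportFn_eq_inner_iff_norm_adjoint_eq (hK : IsCompact K) (hne : K.Nonempty)
    {f : F →ᵃ[ℝ] E} (hKf : RaySubset x K (f '' closedBall 0 1))
    (hfK : RaySubset x (f '' closedBall 0 1) K) (z : E) :
    supportFn K z = ⟪x, z⟫ ↔ ‖LinearMap.adjoint f.linear z‖ = -⟪f 0 - x, z⟫ := by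
  have hcont : Continuous f := AffineMap.continuous_of_finiteDimensional f
  rw [hKf.supportFn_eq_inner_iff hfK hK hne ((isCompact_closedBall 0 1).image hcont)
    ((nonempty_closedBall.2 zero_le_one).image f), supportFn_image_closedBall, inner_sub_left]
  constructor <;> intro h <;> linarith

theorem isTangentForm_dualConeForm (hK : IsCompact K) (hint : (interior K).Nonempty)
    {f : F →ᵃ[ℝ] E} (hKf : RaySubset x K (f '' closedBall 0 1))
    (hfK : RaySubset x (f '' closedBall 0 1) K) : IsTangentForm K x (dualConeForm f x) := by
  set T := LinearMap.adjoint f.linear with hT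
  have hsupp : ∀ z, supportFn K z = ⟪x, z⟫ ↔ ‖T z‖ = -⟪f 0 - x, z⟫ :=
    supportFn_eq_inner_iff_norm_adjoint_eq hK (hint.mono interior_subset) hKf hfK
  refine ⟨fun z => ?_, fun p hp hxp g hg hgp => ?_⟩
  · rw [dualConeForm_apply, sub_eq_zero, sq_eq_sq_iff_eq_or_eq_neg, hsupp, hsupp, map_neg,
      norm_neg, inner_neg_right, neg_neg, or_comm]
  have hTp := (hsupp p).1 hxp
  have hTpos : T p ≠ 0 := by
    intro h
    have hneg : supportFn K (-p) = ⟪x, -p⟫ := (hsupp (-p)).2 (by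
      rw [inner_neg_right, neg_neg, map_neg, norm_neg, ← neg_neg ⟪f 0 - x, p⟫, ← hTp, h]
      simp)
    have hwidth := supportFn_add_supportFn_neg_pos hK hint hp
    rw [hneg, hxp, inner_neg_right, add_neg_cancel] at hwidth
    exact hwidth.false
  obtain ⟨_, ⟨b, hb, rfl⟩, t, ht, hgb⟩ := hKf g hg
  rw [mem_closedBall_zero_iff] at hb
  have hbp : ⟪f b, p⟫ = ⟪x, p⟫ := (inner_eq_iff_of_sub_eq_smul ht.ne' hgb).1 hgp
  have hbT : ⟪b, T p⟫ = ‖T p‖ := by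
    rw [inner_affineMap_eq, ← hT] at hbp
    rw [hTp, inner_sub_left]
    linarith
  refine ⟨2 * ‖T p‖ / t, by positivity, fun v => ?_⟩
  have hv : ⟪T p, T v⟫ = ‖T p‖ * ⟪b, T v⟫ := by
    rw [← real_inner_smul_left, norm_smul_eq_of_inner_eq_norm hb hbT]
  calc QuadraticMap.polar (dualConeForm f x) p v
      = 2 * ‖T p‖ * ⟪f b - x, v⟫ := by
        rw [polar_dualConeForm, ← hT, hv, ← neg_eq_iff_eq_neg.2 hTp, inner_sub_left (f b),
          inner_affineMap_eq f b, ← hT, inner_sub_left (f 0)]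
        ring
    _ = 2 * ‖T p‖ / t * ⟪g - x, v⟫ := by
        rw [hgb, real_inner_smul_left, ← mul_assoc, div_mul_cancel₀ _ ht.ne']

end TangentForm

theorem IsEllipsoidalConeAt.exists_isTangentForm {n : ℕ} {K : Set (EuclideanSpace ℝ (Fin n))}
    (hK : IsConvexBody K) {x : EuclideanSpace ℝ (Fin n)} (hx : x ∉ K)
    (h : IsEllipsoidalConeAt (cone K x) x) : ∃ Q, IsTangentForm K x Q := by
  obtain ⟨u, c, -, hu, f, -, hf⟩ := h
  have hcont : Continuous f := AffineMap.continuous_of_finiteDimensional f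
  have hfK := raySubset_cone_slice (K := K) hu
  have hKf := raySubset_slice_of_isBounded hK.2.1.isPreconnected hx hu
    (hf ▸ (nonempty_closedBall.2 zero_le_one).image f)
    (hf ▸ ((isCompact_closedBall 0 1).image hcont).isBounded)
  rw [hf] at hfK hKf
  exact ⟨_, isTangentForm_dualConeForm hK.1 hK.2.2 hKf hfK⟩

/-! ### The support function satisfies a quadratic equation locally -/

section LocalQuadric

variable {E : Type*} [NormedAddCommGroup E] [InnerProductSpace ℝ E] {K G : Set E}
  {p g x x' a b c y : E} {Q Q' : QuadraticForm ℝ E}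

theorem linearIndependent_innerₗ_sub_iff :
    LinearIndependent ℝ ![innerₗ E x - innerₗ E a, innerₗ E x - innerₗ E b] ↔
      ¬Collinear ℝ {x, a, b} := by
  have hker : LinearMap.ker (innerₗ E) = ⊥ :=
    LinearMap.ker_eq_bot'.2 fun z hz => inner_self_eq_zero (𝕜 := ℝ).1 congr($hz z)
  have hcomp : ![innerₗ E x - innerₗ E a, innerₗ E x - innerₗ E b] =
      innerₗ E ∘ ![x - a, x - b] := by
    funext i
    fin_cases i
    exacts [(map_sub (innerₗ E) x a).symm, (map_sub (innerₗ E) x b).symm]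
  rw [hcomp, LinearMap.linearIndependent_iff _ hker, linearIndependent_sub_sub_iff_not_collinear]

theorem exists_inner_eq_and_inner_sub_ne_zero (h : ¬Collinear ℝ {g, x, x'}) :
    ∃ z, ⟪x, z⟫ = ⟪x', z⟫ ∧ ⟪g - x, z⟫ ≠ 0 := by
  by_contra! hker
  obtain ⟨k, hk⟩ := exists_eq_smul_of_ker_le_ker (b := innerₗ E x - innerₗ E x')
    (m := innerₗ E x - innerₗ E g) fun z hz => by
      have hgz := hker z (sub_eq_zero.1 hz)
      rw [← neg_sub, inner_neg_left, neg_eq_zero, inner_sub_left] at hgz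
      exact hgz
  rw [insert_comm] at h
  exact one_ne_zero (LinearIndependent.pair_iff.1 (linearIndependent_innerₗ_sub_iff.2 h) 1 (-k)
    (by rw [hk]; module)).1

/-- The points of `∂G` on the lines through two of `g`, `a`, `b`, `c` other than the line `a b`,
which may meet `∂G` in infinitely many points. At these points the dual form need not be determined
by its comparison with the dual forms at the vertices. -/
def exceptionalSet (G : Set E) (g a b c : E) : Set E :=
  {x ∈ frontier G | Collinear ℝ {x, g, a} ∨ Collinear ℝ {x, g, b} ∨ Collinear ℝ {x, g, c} ∨
    Collinear ℝ {x, c, a} ∨ Collinear ℝ {x, c, b}}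

namespace IsBaseTriangle

theorem finite_exceptionalSet (h : IsBaseTriangle G g a b c) (hG : Convex ℝ G)
    (hg : g ∈ interior G) : (exceptionalSet G g a b c).Finite := by
  obtain ⟨o, ho, hoca⟩ := h.exists_mem_c_a
  obtain ⟨o', ho', hocb⟩ := h.exists_mem_c_b
  have hgab := h.not_collinear_g_a_b
  have hgac := h.not_collinear_g_a_c
  have hfin : ∀ d, g ≠ d → {x ∈ frontier G | Collinear ℝ {x, g, d}}.Finite := fun d hgd =>
    finite_frontier_inter_line hG hg hgd (by simpa using collinear_pair ℝ g d)
  simp only [exceptionalSet, and_or_left, ofPred_or]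
  exact (hfin a (ne₁₂_of_not_collinear hgab)).union <|
    (hfin b (ne₁₃_of_not_collinear hgab)).union <|
    (hfin c (ne₁₃_of_not_collinear hgac)).union <|
    (finite_frontier_inter_line hG ho (ne₁₂_of_not_collinear h.not_collinear_c_a_b) hoca).union
    (finite_frontier_inter_line hG ho' (ne₁₃_of_not_collinear h.not_collinear_c_a_b) hocb)

theorem mem_exceptionalSet (h : IsBaseTriangle G g a b c) : a ∈ exceptionalSet G g a b c :=
  ⟨h.mem_a, .inl (by simpa [insert_comm] using collinear_pair ℝ g a)⟩

end IsBaseTriangle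

namespace IsNormalizedTangentForm

theorem apply_eq_zero (hQ : IsNormalizedTangentForm K p g x Q) (hy : supportFn K y = ⟪x, y⟫) :
    Q y = 0 :=
  (hQ.eq_zero_iff y).2 (.inl hy)

theorem ne_zero (hQ : IsNormalizedTangentForm K p g x Q) (hgx : g ≠ x) : Q ≠ 0 := by
  rintro rfl
  have h := hQ.polar_eq (g - x)
  simp [QuadraticMap.polar, sub_eq_zero, hgx] at h

theorem eq_of_inner_eq (hQ : IsNormalizedTangentForm K p g x Q)
    (hQ' : IsNormalizedTangentForm K p g x' Q') (hcol : ¬Collinear ℝ {g, x, x'}) {z : E}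
    (hz : ⟪x, z⟫ = ⟪x', z⟫) : Q z = Q' z := by
  set W := LinearMap.ker (innerₗ E x - innerₗ E x')
  have hmem : ∀ {z}, z ∈ W ↔ ⟪x, z⟫ = ⟪x', z⟫ := sub_eq_zero
  have hpW : p ∈ W := hmem.2 (hQ.supportFn_eq.symm.trans hQ'.supportFn_eq)
  have hφ : ((2 : ℝ) • innerₗ E (g - x)).domRestrict W ≠ 0 := by
    intro h
    obtain ⟨w, hw, hgw⟩ := exists_inner_eq_and_inner_sub_ne_zero hcol
    exact mul_ne_zero two_ne_zero hgw congr($h ⟨w, hmem.2 hw⟩)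
  have hrestrict : Q.comp W.subtype = Q'.comp W.subtype := by
    refine eq_of_polar_eq (p := ⟨p, hpW⟩) hφ (hQ.apply_eq_zero hQ.supportFn_eq)
      (hQ'.apply_eq_zero hQ'.supportFn_eq) (fun v => hQ.polar_eq v) (fun v => ?_) fun w hw => ?_
    · refine (hQ'.polar_eq v).trans ?_
      rw [inner_sub_left, ← hmem.1 v.2, ← inner_sub_left]
      rfl
    · refine (hQ'.eq_zero_iff w).2 ?_
      rw [inner_neg_right, ← hmem.1 w.2, ← inner_neg_right]
      exact (hQ.eq_zero_iff w).1 hw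
  exact congr($hrestrict ⟨z, hmem.2 hz⟩)

theorem exists_quadPencil {Qa Qb Qc : QuadraticForm ℝ E} (ha : IsNormalizedTangentForm K p g a Qa)
    (hb : IsNormalizedTangentForm K p g b Qb) (hc : IsNormalizedTangentForm K p g c Qc)
    (h : IsBaseTriangle G g a b c) :
    ∃ B l k, l p + 2 * k * supportFn K p = -2 ∧ ∀ x ∈ frontier G, x ∉ exceptionalSet G g a b c →
      ¬Collinear ℝ {x, a, b} → ∀ Q, IsNormalizedTangentForm K p g x Q →
        Q = quadPencil B l k (innerₗ E x) := by
  have hab : a - b ≠ 0 := sub_ne_zero.2 (ne₂₃_of_not_collinear h.not_collinear_g_a_b)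
  obtain ⟨B, l, k, rfl, rfl, rfl⟩ := _root_.exists_quadPencil
    (linearIndependent_innerₗ_sub_iff.2 h.not_collinear_c_a_b)
    (fun hE => hab (inner_self_eq_zero (𝕜 := ℝ).1
      ((inner_sub_left a b _).trans (sub_eq_zero.2 congr($hE (a - b))))))
    (fun z hz => (ha.eq_of_inner_eq hb h.not_collinear_g_a_b (sub_eq_zero.1 hz).symm).symm)
    (fun z hz => (ha.eq_of_inner_eq hc h.not_collinear_g_a_c (sub_eq_zero.1 hz).symm).symm)
    (fun z hz => (hb.eq_of_inner_eq hc h.not_collinear_g_b_c (sub_eq_zero.1 hz).symm).symm)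
  refine ⟨B, l, k, ?_, fun x hx hxF hxab Q hQ => ?_⟩
  · have hp : innerₗ E a p = innerₗ E b p := ha.supportFn_eq.symm.trans hb.supportFn_eq
    have hpol := quadPencil_polar_sub (B := B) (l := l) (k := k) hp (a - b)
    rw [ha.polar_eq, hb.polar_eq, innerₗ_apply_apply, innerₗ_apply_apply, innerₗ_apply_apply,
      ← hb.supportFn_eq, ← inner_sub_left] at hpol
    refine mul_right_cancel₀ (inner_self_ne_zero (𝕜 := ℝ).2 hab) ?_
    rw [← hpol]
    simp only [inner_sub_left]
    ring
  · have hxcol := fun hcol => hxF ⟨hx, hcol⟩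
    simp only [imp_false, not_or] at hxcol
    obtain ⟨hga, hgb, hgc, hac, hbc⟩ := hxcol
    rw [insert_comm] at hga hgb hgc
    rw [pair_comm] at hac hbc
    exact eq_quadPencil (linearIndependent_innerₗ_sub_iff.2 hxab)
      (linearIndependent_innerₗ_sub_iff.2 hac) (linearIndependent_innerₗ_sub_iff.2 hbc)
      (fun z hz => hQ.eq_of_inner_eq ha hga (sub_eq_zero.1 hz))
      (fun z hz => hQ.eq_of_inner_eq hb hgb (sub_eq_zero.1 hz))
      (fun z hz => hQ.eq_of_inner_eq hc hgc (sub_eq_zero.1 hz))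

end IsNormalizedTangentForm

theorem exists_ne_mem_frontier_inner_eq (hE : 3 ≤ Module.finrank ℝ E) (hG : IsBounded G) {q : E}
    (hq : q ∈ interior G) (p y : E) :
    ∃ x ∈ frontier G, ∃ x' ∈ frontier G, x ≠ x' ∧ ⟪x, p⟫ = ⟪q, p⟫ ∧ ⟪x, y⟫ = ⟪q, y⟫ ∧
      ⟪x', p⟫ = ⟪q, p⟫ ∧ ⟪x', y⟫ = ⟪q, y⟫ := by
  obtain ⟨v, hv, hpv, hyv⟩ := exists_ne_zero_inner_eq_zero hE p y
  have hinner : ∀ t : ℝ, ⟪q + t • v, p⟫ = ⟪q, p⟫ ∧ ⟪q + t • v, y⟫ = ⟪q, y⟫ := fun t => by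
    simp only [inner_add_left, real_inner_smul_left, real_inner_comm _ v, hpv, hyv, mul_zero,
      add_zero, and_self]
  obtain ⟨t, ht, hx⟩ := exists_add_smul_mem_frontier hG hq hv
  obtain ⟨s, hs, hx'⟩ := exists_add_smul_mem_frontier hG hq (neg_ne_zero.2 hv)
  rw [smul_neg, ← neg_smul] at hx'
  refine ⟨_, hx, _, hx', fun h => ?_, (hinner t).1, (hinner t).2, (hinner _).1, (hinner _).2⟩
  linarith [smul_left_injective ℝ hv (add_left_cancel h)]

-- A chord of `G` in the intersection of two supporting hyperplanes of `K` has an end point at which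
-- the dual form belongs to the pencil, unless `y` is a zero of an exceptional dual form.
theorem supportFn_quadratic_eq_zero {Q : E → QuadraticForm ℝ E} {B : QuadraticForm ℝ E}
    {l : E →ₗ[ℝ] ℝ} {k : ℝ} (hE : 3 ≤ Module.finrank ℝ E) (hG : IsBounded G)
    (hQ : ∀ x ∈ frontier G, supportFn K p = ⟪x, p⟫ → IsNormalizedTangentForm K p g x (Q x))
    (h : IsBaseTriangle G g a b c) (hap : supportFn K p = ⟪a, p⟫)
    (hpencil : ∀ x ∈ frontier G, x ∉ exceptionalSet G g a b c → ¬Collinear ℝ {x, a, b} →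
      ∀ Q, IsNormalizedTangentForm K p g x Q → Q = quadPencil B l k (innerₗ E x))
    {q : E} (hq : q ∈ interior G) (hqp : ⟪q, p⟫ = supportFn K p) (hqy : ⟪q, y⟫ = supportFn K y)
    (hy : ∀ x ∈ exceptionalSet G g a b c, supportFn K p = ⟪x, p⟫ → Q x y ≠ 0) :
    k * supportFn K y ^ 2 + l y * supportFn K y + B y = 0 := by
  obtain ⟨x, hx, x', hx', hne, hxp, hxy, hx'p, hx'y⟩ := exists_ne_mem_frontier_inner_eq hE hG hq p y
  rw [hqp] at hxp hx'p
  rw [hqy] at hxy hx'y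
  have hgood : ∀ x ∈ frontier G, ⟪x, p⟫ = supportFn K p → ⟪x, y⟫ = supportFn K y →
      ¬Collinear ℝ {x, a, b} → k * supportFn K y ^ 2 + l y * supportFn K y + B y = 0 := by
    intro x hx hxp hxy hxab
    have hQx := hQ x hx hxp.symm
    have hzero := hQx.apply_eq_zero hxy.symm
    rw [hpencil x hx (fun hxF => hy x hxF hxp.symm hzero) hxab _ hQx, quadPencil_apply,
      innerₗ_apply_apply, hxy] at hzero
    linear_combination hzero
  by_cases hxab : Collinear ℝ {x, a, b}
  · refine hgood x' hx' hx'p hx'y fun hx'ab => ?_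
    have hay : ⟪a, y⟫ = ⟪x, y⟫ :=
      apply_eq_of_collinear (φ := (innerₗ E).flip y) (ne₂₃_of_not_collinear h.not_collinear_g_a_b)
        hne hxab hx'ab (hxy.trans hx'y.symm)
    exact hy a h.mem_exceptionalSet hap ((hQ a h.mem_a hap).apply_eq_zero (hay.trans hxy).symm)
  · exact hgood x hx hxp hxy hxab

theorem dense_forall_mem_ne_zero [FiniteDimensional ℝ E] {F : Set E} (hF : F.Finite)
    {Q : E → QuadraticForm ℝ E} (hQ : ∀ x ∈ F, Q x ≠ 0) : Dense {y | ∀ x ∈ F, Q x y ≠ 0} := by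
  simp only [ofPred_forall]
  exact dense_biInter_of_isOpen
    (fun x _ => isOpen_ne_fun (continuous_quadraticForm (Q x)) continuous_const) hF.countable
    fun x hx => dense_quadraticForm_ne_zero (hQ x hx)

theorem exists_isNormalizedTangentForm_family
    (hQ : ∀ x ∈ frontier G, ∃ Q, IsTangentForm K x Q) (hp : p ≠ 0) (hg : g ∈ K)
    (hgp : supportFn K p = ⟪g, p⟫) :
    ∃ Q : E → QuadraticForm ℝ E, ∀ x ∈ frontier G, supportFn K p = ⟪x, p⟫ →
      IsNormalizedTangentForm K p g x (Q x) := by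
  have hex : ∀ x, ∃ Q, x ∈ frontier G → supportFn K p = ⟪x, p⟫ →
      IsNormalizedTangentForm K p g x Q := by
    intro x
    by_cases hx : x ∈ frontier G ∧ supportFn K p = ⟪x, p⟫
    · obtain ⟨Q, hxQ⟩ := hQ x hx.1
      obtain ⟨Q', hQ'⟩ := hxQ.exists_isNormalizedTangentForm hp hx.2 hg (hgp.symm.trans hx.2)
      exact ⟨Q', fun _ _ => hQ'⟩
    · exact ⟨0, fun hxG hxp => absurd ⟨hxG, hxp⟩ hx⟩
  choose Q hQ using hex
  exact ⟨Q, hQ⟩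

theorem eventually_supportFn_quadratic_eq_zero (hE : 3 ≤ Module.finrank ℝ E) (hK : IsCompact K)
    (hne : K.Nonempty) (hG : Convex ℝ G) (hGb : IsBounded G) (hKG : K ⊆ interior G)
    (hQ : ∀ x ∈ frontier G, ∃ Q, IsTangentForm K x Q) (hp : p ≠ 0) :
    ∃ (B : QuadraticForm ℝ E) (l : E →ₗ[ℝ] ℝ) (k : ℝ), l p + 2 * k * supportFn K p = -2 ∧
      ∀ᶠ y in nhds p, k * supportFn K y ^ 2 + l y * supportFn K y + B y = 0 := by
  have : FiniteDimensional ℝ E := Module.finite_of_finrank_pos (by lia)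
  obtain ⟨g, hg, hgp⟩ := exists_inner_eq_supportFn hK hne p
  have hgG := hKG hg
  obtain ⟨Q, hQ⟩ := exists_isNormalizedTangentForm_family hQ hp hg hgp.symm
  obtain ⟨u, v, huv, hpu, hpv⟩ := exists_linearIndependent_pair_inner_eq_zero hE p
  obtain ⟨a, b, c, h, ha, hb, hc⟩ := exists_isBaseTriangle hGb hgG huv (φ := innerₗ E p) hpu hpv
  have hplane : ∀ x, innerₗ E p x = innerₗ E p g → supportFn K p = ⟪x, p⟫ := fun x hx => by
    rw [← hgp, real_inner_comm, real_inner_comm p]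
    exact hx.symm
  obtain ⟨B, l, k, hlk, hpencil⟩ := (hQ a h.mem_a (hplane a ha)).exists_quadPencil
    (hQ b h.mem_b (hplane b hb)) (hQ c h.mem_c (hplane c hc)) h
  have hdense := dense_forall_mem_ne_zero (Q := Q)
    ((h.finite_exceptionalSet hG hgG).subset (sep_subset _ fun x => supportFn K p = ⟪x, p⟫))
    fun x hx => (hQ x hx.1.1 hx.2).ne_zero fun hgx => hx.1.1.2 (hgx ▸ hgG)
  have hcont : Continuous fun y => k * supportFn K y ^ 2 + l y * supportFn K y + B y := by
    have hs := continuous_supportFn hK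
    have hB := continuous_quadraticForm B
    have hl := l.continuous_of_finiteDimensional
    fun_prop
  refine ⟨B, l, k, hlk, ?_⟩
  obtain ⟨U, hU, hUo, hpU⟩ := _root_.eventually_nhds_iff.1
    (eventually_exists_mem_interior_supporting hK hne hKG hp)
  refine _root_.eventually_nhds_iff.2 ⟨U, fun y hy => ?_, hUo, hpU⟩
  refine closure_minimal ?_ (isClosed_eq hcont continuous_const)
    (hdense.open_subset_closure_inter hUo hy)
  rintro z ⟨hz, hzF⟩
  obtain ⟨q, hq, hqp, hqz⟩ := hU z hz
  exact supportFn_quadratic_eq_zero hE hGb hQ h (hplane a ha) hpencil hq hqp hqz fun x hx hxp =>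
    hzF x ⟨hx, hxp⟩

end LocalQuadric

/-! ### The support function satisfies a quadratic equation globally -/

section GlobalQuadric

variable {E : Type*} [NormedAddCommGroup E] [InnerProductSpace ℝ E] [FiniteDimensional ℝ E]
  {K : Set E}

theorem supportFn_quadratic_eq_zero_of_eventually (hE : 1 < Module.finrank ℝ E)
    (hK : ∀ y ≠ 0, AnalyticAt ℝ (supportFn K) y) {B : QuadraticForm ℝ E} {l : E →ₗ[ℝ] ℝ} {k : ℝ}
    {p : E} (hp : p ≠ 0)
    (h : ∀ᶠ y in nhds p, k * supportFn K y ^ 2 + l y * supportFn K y + B y = 0) {y : E}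
    (hy : y ≠ 0) : k * supportFn K y ^ 2 + l y * supportFn K y + B y = 0 := by
  have hconn : IsPreconnected ({0}ᶜ : Set E) :=
    (isConnected_compl_singleton_of_one_lt_rank
      (Module.one_lt_rank_of_one_lt_finrank hE) 0).isPreconnected
  have han : AnalyticOnNhd ℝ (fun y => k * supportFn K y ^ 2 + l y * supportFn K y + B y) {0}ᶜ :=
    fun z hz => ((analyticAt_const.fun_mul ((hK z hz).fun_pow 2)).fun_add
      ((analyticAt_linearForm l z).fun_mul (hK z hz))).fun_add (analyticAt_quadraticForm B z)
  exact han.eqOn_zero_of_preconnected_of_eventuallyEq_zero hconn hp h hy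

theorem exists_posDef_supportFn_eq (hK : IsCompact K) (hint : (interior K).Nonempty)
    {B : QuadraticForm ℝ E} {l : E →ₗ[ℝ] ℝ} {k : ℝ} {p : E} (hp : p ≠ 0)
    (hlk : l p + 2 * k * supportFn K p ≠ 0)
    (h : ∀ y ≠ 0, k * supportFn K y ^ 2 + l y * supportFn K y + B y = 0) :
    ∃ (a : E) (q : QuadraticForm ℝ E), q.PosDef ∧ ∀ y, supportFn K y = ⟪a, y⟫ + √(q y) := by
  have hwidth : ∀ y ≠ 0, l y = -k * (supportFn K y - supportFn K (-y)) := by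
    intro y hy
    have hneg := h (-y) (neg_ne_zero.2 hy)
    rw [map_neg, QuadraticMap.map_neg] at hneg
    refine mul_right_cancel₀ (supportFn_add_supportFn_neg_pos hK hint hy).ne' ?_
    linear_combination h y hy - hneg
  have hk : k ≠ 0 := by
    rintro rfl
    exact hlk (by rw [hwidth p hp]; ring)
  let q : QuadraticForm ℝ E := (2 * k)⁻¹ ^ 2 • QuadraticMap.sq.comp l - k⁻¹ • B
  have hq : ∀ y, q y = ((2 * k)⁻¹ * l y) ^ 2 - k⁻¹ * B y := fun y => by
    simp only [q, sub_apply, smul_apply, QuadraticMap.comp_apply,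
      QuadraticMap.sq_apply, smul_eq_mul]
    ring
  have hs : ∀ y ≠ 0, 0 < supportFn K y + (2 * k)⁻¹ * l y := by
    intro y hy
    have hmean : supportFn K y + (2 * k)⁻¹ * l y = (supportFn K y + supportFn K (-y)) / 2 := by
      rw [hwidth y hy]
      field_simp
      ring
    rw [hmean]
    exact half_pos (supportFn_add_supportFn_neg_pos hK hint hy)
  have hsq : ∀ y ≠ 0, q y = (supportFn K y + (2 * k)⁻¹ * l y) ^ 2 := by
    intro y hy
    rw [hq]
    field_simp
    linear_combination (-4 * k) * h y hy
  refine ⟨(InnerProductSpace.toDual ℝ E).symm (-(2 * k)⁻¹ • l.toContinuousLinearMap), q,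
    fun y hy => (hsq y hy).symm ▸ pow_pos (hs y hy) 2, fun y => ?_⟩
  rw [InnerProductSpace.toDual_symm_apply]
  rcases eq_or_ne y 0 with rfl | hy
  · obtain ⟨x, hx⟩ := hint
    simp [supportFn_eq_of_forall_le (interior_subset hx) (y := 0) (by simp)]
  · rw [hsq y hy, Real.sqrt_sq (hs y hy).le]
    simp

end GlobalQuadric

theorem stmt12_general {n : ℕ} (hn : 3 ≤ n) (K G : Set (EuclideanSpace ℝ (Fin n)))
    (hK : IsConvexBody K) (hG : Convex ℝ G) (hGb : IsBounded G) (hKG : K ⊆ interior G)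
    (hcones : ∀ x ∈ frontier G, IsEllipsoidalConeAt (cone K x) x) : IsEllipsoid K := by
  have hE : 3 ≤ Module.finrank ℝ (EuclideanSpace ℝ (Fin n)) := by
    rwa [finrank_euclideanSpace_fin]
  have htangent : ∀ x ∈ frontier G, ∃ Q, IsTangentForm K x Q := fun x hx =>
    (hcones x hx).exists_isTangentForm hK fun hxK => hx.2 (hKG hxK)
  have hlocal := fun {p} => eventually_supportFn_quadratic_eq_zero (p := p) hE hK.1
    (hK.2.2.mono interior_subset) hG hGb hKG htangent
  have hanalytic : ∀ y ≠ 0, AnalyticAt ℝ (supportFn K) y := by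
    intro y hy
    obtain ⟨B, l, k, hlk, h⟩ := hlocal hy
    exact analyticAt_of_quadratic_eq_zero (analyticAt_linearForm l y) (analyticAt_quadraticForm B y)
      (continuous_supportFn hK.1).continuousAt h (by linarith)
  have : Nontrivial (EuclideanSpace ℝ (Fin n)) :=
    Module.nontrivial_of_finrank_pos (Nat.zero_lt_of_lt hE)
  obtain ⟨p, hp⟩ := exists_ne (0 : EuclideanSpace ℝ (Fin n))
  obtain ⟨B, l, k, hlk, h⟩ := hlocal hp
  obtain ⟨a, q, hq, hKq⟩ := exists_posDef_supportFn_eq hK.1 hK.2.2 hp (by simp [hlk])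
    fun y => supportFn_quadratic_eq_zero_of_eventually (Nat.lt_of_succ_lt hE) hanalytic hp h
  exact isEllipsoid_of_supportFn_eq hK hq hKq

/-- [MMJ]: if `K` is an O-symmetric convex body inside `G` and all cones over `K` with
apex on `bd G` are ellipsoidal, then `K` is an ellipsoid. -/
theorem stmt12 {n : ℕ} (hn : 3 ≤ n) (K G : Set (EuclideanSpace ℝ (Fin n)))
    (hK : IsConvexBody K) (hG : IsConvexBody G)
    (hKG : K ⊆ interior G) (hKsym : K = -K)
    (hcones : ∀ x ∈ frontier G, IsEllipsoidalConeAt (cone K x) x) :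
    IsEllipsoid K :=
  stmt12_general hn K G hK hG.2.1 hG.1.isBounded hKG hcones
end
end

section
/- Let K and G be convex bodies in R^n (n ≥ 3) with O an interior point of both, such that for every hyperplane Π through O the sections Π ∩ K and Π ∩ G are homothetic (one is a positive scalar multiple plus translation of the other). Then K and G are homothetic. -/
open Set Metric Function Bornology
open scoped RealInnerProductSpace Pointwise

noncomputable section

/-
Take `O` to be the origin and scale `K` so that `G ⊆ K` and `G` touches the boundary of `K`. On
the supporting hyperplane at a contact point, let `X` be the point of `G` of largest norm; within
that face of `G` it is exposed by a functional `w` vanishing at `X`. A homothety between sections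
through `X` maps top face to top face. The section by `wᗮ` shows that the face of `K` meets `wᗮ`
only in `X`, and from this every section through `X` that avoids one fixed direction `d` has a
homothety with centre `X`. These sections share the line through `X`, so they all have the same
ratio. In dimension at least `3` they cover the complement of the proper subspace spanned by `X`
and `d`, and a density argument extends the homothety to all of `K` and `G`.
-/

lemma span_pair_ne_top {R M : Type*} [Ring R] [StrongRankCondition R] [AddCommGroup M] [Module R M]
    (hdim : 3 ≤ Module.finrank R M) (x y : M) : Submodule.span R {x, y} ≠ ⊤ := by
  classical
  intro htop
  have hle : Module.finrank R (Submodule.span R ({x, y} : Set M)) ≤ 2 := by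
    have hcard := finrank_span_finset_le_card (R := R) ({x, y} : Finset M)
    rw [Finset.coe_pair] at hcard
    exact hcard.trans Finset.card_le_two
  rw [htop, finrank_top] at hle
  lia

section Homothety

variable {E : Type*} [AddCommGroup E] [Module ℝ E]

/-- `B` is a positive homothetic copy of `A`, i.e. `B = r • A + t` for some `r > 0` and `t`. -/
def IsHomothetic (A B : Set E) : Prop :=
  ∃ r : ℝ, 0 < r ∧ ∃ t : E, B = (fun p => r • p + t) '' A

namespace IsHomothetic

variable {A B C : Set E}

lemma symm (h : IsHomothetic A B) : IsHomothetic B A := by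
  obtain ⟨r, hr, t, rfl⟩ := h
  refine ⟨r⁻¹, inv_pos.2 hr, -(r⁻¹ • t), ?_⟩
  simp [image_image, smul_add, inv_smul_smul₀ hr.ne']

lemma trans (hAB : IsHomothetic A B) (hBC : IsHomothetic B C) : IsHomothetic A C := by
  obtain ⟨r, hr, t, rfl⟩ := hAB
  obtain ⟨s, hs, v, rfl⟩ := hBC
  refine ⟨s * r, mul_pos hs hr, s • t + v, ?_⟩
  simp only [image_image, smul_add, mul_smul, add_assoc]

end IsHomothetic

lemma isHomothetic_smul_set (A : Set E) {r : ℝ} (hr : 0 < r) : IsHomothetic A (r • A) :=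
  ⟨r, hr, 0, by simp⟩

lemma isHomothetic_vadd_set (A : Set E) (t : E) : IsHomothetic A (t +ᵥ A) :=
  ⟨1, one_pos, t, by simp only [one_smul, ← image_vadd, vadd_eq_add, add_comm]⟩

lemma homothety_apply_eq_smul_add (c : E) (r : ℝ) (p : E) :
    AffineMap.homothety c r p = r • p + (c - r • c) := by
  rw [AffineMap.homothety_apply, vadd_eq_add, vsub_eq_sub, smul_sub]
  abel

lemma isHomothetic_image_homothety (A : Set E) (c : E) {r : ℝ} (hr : 0 < r) :
    IsHomothetic A (AffineMap.homothety c r '' A) :=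
  ⟨r, hr, c - r • c, image_congr fun p _ => homothety_apply_eq_smul_add c r p⟩

end Homothety

section ConvexSets

variable {E : Type*} [NormedAddCommGroup E] [NormedSpace ℝ E]

lemma diam_image_homothety (c : E) (r : ℝ) (s : Set E) :
    diam (AffineMap.homothety c r '' s) = |r| * diam s := by
  have himage : AffineMap.homothety c r '' s = (c - r • c) +ᵥ r • s := by
    simp only [← image_smul, ← image_vadd, image_image, homothety_apply_eq_smul_add, vadd_eq_add,
      add_comm]
  rw [himage, diam_vadd, diam_smul₀, Real.norm_eq_abs]

lemma dense_compl_submodule {W : Submodule ℝ E} (hW : W ≠ ⊤) : Dense (W : Set E)ᶜ := by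
  rw [← interior_eq_empty_iff_dense_compl]
  by_contra hne
  exact hW (W.eq_top_of_nonempty_interior' (nonempty_iff_ne_empty.2 hne))

lemma subset_of_diff_submodule_subset {S C : Set E} (hS : Convex ℝ S)
    (hint : (interior S).Nonempty) {W : Submodule ℝ E} (hW : W ≠ ⊤) (hC : IsClosed C)
    (hSC : S \ W ⊆ C) : S ⊆ C :=
  calc
    S ⊆ closure (interior S) := by
      rw [hS.closure_interior_eq_closure_of_nonempty_interior hint]
      exact subset_closure
    _ ⊆ closure (interior S ∩ (W : Set E)ᶜ) := closure_minimal
      ((dense_compl_submodule hW).open_subset_closure_inter isOpen_interior) isClosed_closure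
    _ ⊆ C := closure_minimal
      ((inter_subset_inter_left _ interior_subset).trans hSC) hC

lemma exists_supporting_functional_pos {K : Set E} (hK : Convex ℝ K) (h0 : 0 ∈ interior K)
    {X : E} (hX : X ∉ interior K) :
    ∃ f : StrongDual ℝ E, 0 < f X ∧ ∀ p ∈ K, f p ≤ f X := by
  obtain ⟨f, hf, hle⟩ := geometric_hahn_banach_of_nonempty_interior_point hK hX ⟨0, h0⟩
  refine ⟨f, ?_, hle⟩
  by_contra! hnonpos
  have hmax : IsLocalMax f 0 := by
    filter_upwards [mem_interior_iff_mem_nhds.1 h0] with p hp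
    simpa using (hle p hp).trans hnonpos
  exact hf (hmax.hasFDerivAt_eq_zero f.hasFDerivAt)

lemma exists_smul_superset_touching [Nontrivial E] {K G : Set E} (hKcpt : IsCompact K)
    (hGcpt : IsCompact G) (hK : Convex ℝ K) (hK0 : 0 ∈ interior K) (hG0 : 0 ∈ interior G) :
    ∃ N : ℝ, 0 < N ∧ G ⊆ N • K ∧ ∃ X ∈ G, X ∉ interior (N • K) := by
  have hKnhds := mem_interior_iff_mem_nhds.1 hK0
  obtain ⟨X, hXG, hXmax⟩ := hGcpt.exists_isMaxOn ⟨0, interior_subset hG0⟩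
    (continuous_gauge hK hKnhds).continuousOn
  have hpos : 0 < gauge K X := by
    obtain ⟨y, hyG, hy0⟩ :=
      (infinite_of_mem_nhds 0 (mem_interior_iff_mem_nhds.1 hG0)).nontrivial.exists_ne 0
    have hy : 0 < gauge K y := (gauge_pos (absorbent_nhds_zero hKnhds)
      ((NormedSpace.isVonNBounded_iff ℝ).2 hKcpt.isBounded)).2 hy0
    exact hy.trans_le (hXmax hyG)
  set N := gauge K X
  have hgauge (p : E) : gauge (N • K) p = N⁻¹ * gauge K p := by
    rw [gauge_smul_left_of_nonneg hpos.le, Pi.smul_apply, smul_eq_mul]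
  have hNK : Convex ℝ (N • K) := hK.smul N
  have hNnhds : N • K ∈ nhds 0 := (set_smul_mem_nhds_zero_iff hpos.ne').2 hKnhds
  refine ⟨N, hpos, fun p hp => ?_, X, hXG, ?_⟩
  · rw [← (hKcpt.smul N).isClosed.closure_eq, ← gauge_le_one_iff_mem_closure hNK hNnhds, hgauge]
    exact inv_mul_le_one_of_le₀ (hXmax hp) hpos.le
  · rw [← gauge_lt_one_iff_mem_interior hNK hNnhds, hgauge, inv_mul_cancel₀ hpos.ne']
    exact lt_irrefl 1

end ConvexSets

section InnerProduct

variable {E : Type*} [NormedAddCommGroup E] [InnerProductSpace ℝ E]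

lemma inner_lt_norm_sq_of_norm_le {p X : E} (hp : ‖p‖ ≤ ‖X‖) (hne : p ≠ X) :
    ⟪X, p⟫ < ‖X‖ ^ 2 := by
  have hdist : 0 < ‖p - X‖ ^ 2 := by positivity [sub_ne_zero.2 hne]
  have hsq : ‖p‖ ^ 2 ≤ ‖X‖ ^ 2 := by gcongr
  rw [norm_sub_sq_real, real_inner_comm] at hdist
  linarith

lemma exists_inner_ne_zero_of_notMem_span_pair [FiniteDimensional ℝ E] {X p d : E}
    (hd : d ∉ Submodule.span ℝ {X, p}) : ∃ u : E, ⟪u, X⟫ = 0 ∧ ⟪u, p⟫ = 0 ∧ ⟪u, d⟫ ≠ 0 := by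
  contrapose! hd
  rw [← Submodule.orthogonal_orthogonal (Submodule.span ℝ {X, p}), Submodule.mem_orthogonal]
  intro u hu
  rw [Submodule.mem_orthogonal'] at hu
  exact hd u (hu X (Submodule.subset_span (by simp))) (hu p (Submodule.subset_span (by simp)))

/-- `K` and `G` have homothetic sections by every hyperplane through the origin. -/
def HasHomotheticSections (K G : Set E) : Prop :=
  ∀ u : E, u ≠ 0 → IsHomothetic ({p | ⟪u, p⟫ = 0} ∩ K) ({p | ⟪u, p⟫ = 0} ∩ G)

lemma hyperplane_inter_smul_set (u : E) {r : ℝ} (hr : r ≠ 0) (K : Set E) :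
    {p | ⟪u, p⟫ = 0} ∩ r • K = r • ({p | ⟪u, p⟫ = 0} ∩ K) := by
  ext p
  simp [mem_smul_set_iff_inv_smul_mem₀ hr, inner_smul_right, hr]

lemma hyperplane_inter_neg_vadd_set (u O : E) (K : Set E) :
    {p | ⟪u, p⟫ = 0} ∩ (-O +ᵥ K) = -O +ᵥ ({p | ⟪u, p - O⟫ = 0} ∩ K) := by
  ext p
  simp [mem_vadd_set_iff_neg_vadd_mem]

lemma HasHomotheticSections.smul_left {K G : Set E} (h : HasHomotheticSections K G) {r : ℝ}
    (hr : 0 < r) : HasHomotheticSections (r • K) G := by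
  intro u hu
  rw [hyperplane_inter_smul_set u hr.ne']
  exact (isHomothetic_smul_set _ hr).symm.trans (h u hu)

/-- A point `X` at which `G ⊆ K` touches `K`, with outer normal `e`, together with a direction
`w` orthogonal to `X` that exposes `X` in the face of `G` on the supporting hyperplane. -/
structure IsTouchingPoint (K G : Set E) (e w X : E) : Prop where
  subset : G ⊆ K
  mem : X ∈ G
  inner_pos : 0 < ⟪e, X⟫
  inner_le : ∀ p ∈ K, ⟪e, p⟫ ≤ ⟪e, X⟫
  inner_eq_zero : ⟪w, X⟫ = 0
  inner_neg : ∀ p ∈ G, ⟪e, p⟫ = ⟪e, X⟫ → p ≠ X → ⟪w, p⟫ < 0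

lemma exists_isTouchingPoint [CompleteSpace E] {K G : Set E} (hK : Convex ℝ K)
    (hK0 : 0 ∈ interior K) (hGcpt : IsCompact G) (hGK : G ⊆ K) {X₀ : E} (hX₀G : X₀ ∈ G)
    (hX₀ : X₀ ∉ interior K) : ∃ e w X : E, IsTouchingPoint K G e w X := by
  obtain ⟨f, hfpos, hfle⟩ := exists_supporting_functional_pos hK hK0 hX₀
  obtain ⟨e, rfl⟩ := (InnerProductSpace.toDual ℝ E).surjective f
  simp only [InnerProductSpace.toDual_apply_apply] at hfpos hfle
  have hface : IsCompact (G ∩ {p | ⟪e, p⟫ = ⟪e, X₀⟫}) :=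
    hGcpt.inter_right (isClosed_eq (by fun_prop) continuous_const)
  obtain ⟨X, ⟨hXG, hX : ⟪e, X⟫ = ⟪e, X₀⟫⟩, hXmax⟩ :=
    hface.exists_isMaxOn ⟨X₀, hX₀G, rfl⟩ continuous_norm.continuousOn
  rw [← hX] at hfpos hfle hXmax
  have hw (p : E) :
      ⟪⟪e, X⟫ • X - ‖X‖ ^ 2 • e, p⟫ = ⟪e, X⟫ * ⟪X, p⟫ - ‖X‖ ^ 2 * ⟪e, p⟫ := by
    rw [inner_sub_left, real_inner_smul_left, real_inner_smul_left]
  refine ⟨e, ⟪e, X⟫ • X - ‖X‖ ^ 2 • e, X, hGK, hXG, hfpos, hfle, ?_, fun p hp hpe hne => ?_⟩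
  · rw [hw, real_inner_self_eq_norm_sq]
    ring
  · have hlt := inner_lt_norm_sq_of_norm_le (hXmax ⟨hp, hpe⟩) hne
    rw [hw, hpe]
    nlinarith

namespace IsTouchingPoint

variable {K G : Set E} {e w X : E}

lemma ne_zero (h : IsTouchingPoint K G e w X) : X ≠ 0 := by
  rintro rfl
  simpa using h.inner_pos

lemma inner_image_eq_iff (h : IsTouchingPoint K G e w X) {u : E} (hu : ⟪u, X⟫ = 0) {r : ℝ}
    (hr : 0 < r) {t : E}
    (hsec : {p | ⟪u, p⟫ = 0} ∩ G = (fun p => r • p + t) '' ({p | ⟪u, p⟫ = 0} ∩ K)) (p : E) :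
    ⟪e, r • p + t⟫ = ⟪e, X⟫ ↔ ⟪e, p⟫ = ⟪e, X⟫ := by
  have hinner (p : E) : ⟪e, r • p + t⟫ = r * ⟪e, p⟫ + ⟪e, t⟫ := by
    rw [inner_add_right, inner_smul_right]
  have hfix : r * ⟪e, X⟫ + ⟪e, t⟫ = ⟪e, X⟫ := by
    apply le_antisymm
    · have himage : r • X + t ∈ {p | ⟪u, p⟫ = 0} ∩ G := hsec ▸ ⟨X, ⟨hu, h.subset h.mem⟩, rfl⟩
      rw [← hinner]
      exact h.inner_le _ (h.subset himage.2)
    · obtain ⟨q, ⟨-, hqK⟩, hq : r • q + t = X⟩ := hsec.subset ⟨hu, h.mem⟩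
      calc ⟪e, X⟫ = r * ⟪e, q⟫ + ⟪e, t⟫ := by rw [← hinner, hq]
        _ ≤ r * ⟪e, X⟫ + ⟪e, t⟫ := by gcongr; exact h.inner_le q hqK
  rw [hinner]
  nth_rw 1 [← hfix]
  rw [add_left_inj, mul_right_inj' hr.ne']

lemma eq_of_inner_eq_zero (h : IsTouchingPoint K G e w X) (hsec : HasHomotheticSections K G)
    (hw : w ≠ 0) {p : E} (hp : p ∈ K) (hpe : ⟪e, p⟫ = ⟪e, X⟫) (hpw : ⟪w, p⟫ = 0) : p = X := by
  obtain ⟨r, hr, t, heq⟩ := hsec w hw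
  have hmap : ∀ q ∈ K, ⟪e, q⟫ = ⟪e, X⟫ → ⟪w, q⟫ = 0 → r • q + t = X := by
    intro q hq hqe hqw
    have himage : r • q + t ∈ {p | ⟪w, p⟫ = 0} ∩ G := heq ▸ ⟨q, ⟨hqw, hq⟩, rfl⟩
    by_contra hne
    exact (h.inner_neg _ himage.2
      ((h.inner_image_eq_iff h.inner_eq_zero hr heq q).2 hqe) hne).ne himage.1
  have hpX := (hmap p hp hpe hpw).trans (hmap X (h.subset h.mem) rfl h.inner_eq_zero).symm
  exact smul_right_injective E hr.ne' (add_right_cancel hpX)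

/- If `X` moves, its image lies on the negative side of `w`, so its preimage `q` lies on the
positive side. The segment from `Z` to `q` then crosses `wᗮ` inside the face of `K`, that is, at
`X`; as `X` and `q` lie in `uᗮ`, so does `Z`. -/
lemma smul_add_eq_self (h : IsTouchingPoint K G e w X) (hK : Convex ℝ K)
    (hsec : HasHomotheticSections K G) {Z : E} (hZG : Z ∈ G) (hZe : ⟪e, Z⟫ = ⟪e, X⟫)
    {u : E} (hu : ⟪u, X⟫ = 0) (huZ : ⟪u, Z⟫ ≠ 0) {r : ℝ} (hr : 0 < r) {t : E}
    (heq : {p | ⟪u, p⟫ = 0} ∩ G = (fun p => r • p + t) '' ({p | ⟪u, p⟫ = 0} ∩ K)) :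
    r • X + t = X := by
  by_contra hne
  have hZw : ⟪w, Z⟫ < 0 := h.inner_neg Z hZG hZe (by rintro rfl; exact huZ hu)
  have hw : w ≠ 0 := by
    rintro rfl
    simp at hZw
  obtain ⟨q, ⟨hqu : ⟪u, q⟫ = 0, hqK⟩, hq : r • q + t = X⟩ := heq.subset ⟨hu, h.mem⟩
  have hqe : ⟪e, q⟫ = ⟪e, X⟫ := (h.inner_image_eq_iff hu hr heq q).1 (by rw [hq])
  have hqw : 0 < ⟪w, q⟫ := by
    have himage : r • X + t ∈ {p | ⟪u, p⟫ = 0} ∩ G := heq ▸ ⟨X, ⟨hu, h.subset h.mem⟩, rfl⟩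
    have himage_neg := h.inner_neg _ himage.2 ((h.inner_image_eq_iff hu hr heq X).2 rfl) hne
    have hX := h.inner_eq_zero
    rw [← hq, inner_add_right, inner_smul_right] at hX
    rw [inner_add_right, inner_smul_right, h.inner_eq_zero] at himage_neg
    exact pos_of_mul_pos_right (by linarith : 0 < r * ⟪w, q⟫) hr.le
  obtain ⟨a, b, ha, hb, hab, hcross⟩ :
      ∃ a b : ℝ, 0 < a ∧ 0 < b ∧ a + b = 1 ∧ a * ⟪w, Z⟫ + b * ⟪w, q⟫ = 0 := by
    have hD : 0 < ⟪w, q⟫ - ⟪w, Z⟫ := by linarith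
    refine ⟨⟪w, q⟫ / (⟪w, q⟫ - ⟪w, Z⟫), -⟪w, Z⟫ / (⟪w, q⟫ - ⟪w, Z⟫), div_pos hqw hD,
      div_pos (neg_pos.2 hZw) hD, ?_, ?_⟩ <;> field_simp <;> ring
  have hX : a • Z + b • q = X := by
    refine h.eq_of_inner_eq_zero hsec hw (hK (h.subset hZG) hqK ha.le hb.le hab) ?_ ?_
    · rw [inner_add_right, inner_smul_right, inner_smul_right, hZe, hqe, ← add_mul, hab, one_mul]
    · rwa [inner_add_right, inner_smul_right, inner_smul_right]
  rw [← hX, inner_add_right, inner_smul_right, inner_smul_right, hqu, mul_zero, add_zero] at hu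
  exact huZ ((mul_eq_zero_iff_left ha.ne').1 hu)

lemma exists_direction_smul_add_eq_self (h : IsTouchingPoint K G e w X) (hK : Convex ℝ K)
    (hsec : HasHomotheticSections K G) (hspan : Submodule.span ℝ {X} ≠ ⊤) :
    ∃ d ∉ Submodule.span ℝ {X}, ∀ u : E, ⟪u, X⟫ = 0 → ⟪u, d⟫ ≠ 0 → ∀ r : ℝ, 0 < r → ∀ t : E,
      {p | ⟪u, p⟫ = 0} ∩ G = (fun p => r • p + t) '' ({p | ⟪u, p⟫ = 0} ∩ K) →
      r • X + t = X := by
  by_cases hface : ∃ Z ∈ G, ⟪e, Z⟫ = ⟪e, X⟫ ∧ Z ≠ X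
  · obtain ⟨Z, hZG, hZe, hZX⟩ := hface
    refine ⟨Z, fun hZ => ?_, fun u hu huZ r hr t =>
      h.smul_add_eq_self hK hsec hZG hZe hu huZ hr⟩
    obtain ⟨a, rfl⟩ := Submodule.mem_span_singleton.1 hZ
    rw [inner_smul_right] at hZe
    exact hZX (by rw [(mul_eq_right₀ h.inner_pos.ne').1 hZe, one_smul])
  · push Not at hface
    obtain ⟨d, hd⟩ := SetLike.exists_not_mem_of_ne_top _ hspan
    refine ⟨d, hd, fun u hu _ r hr t heq => ?_⟩
    have himage : r • X + t ∈ {p | ⟪u, p⟫ = 0} ∩ G := heq ▸ ⟨X, ⟨hu, h.subset h.mem⟩, rfl⟩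
    exact hface _ himage.2 ((h.inner_image_eq_iff hu hr heq X).2 rfl)

lemma exists_direction_homothety (h : IsTouchingPoint K G e w X) (hK : Convex ℝ K)
    (hsec : HasHomotheticSections K G) (hspan : Submodule.span ℝ {X} ≠ ⊤) :
    ∃ d ∉ Submodule.span ℝ {X}, ∀ u : E, ⟪u, X⟫ = 0 → ⟪u, d⟫ ≠ 0 → ∃ r : ℝ, 0 < r ∧
      {p | ⟪u, p⟫ = 0} ∩ G = AffineMap.homothety X r '' ({p | ⟪u, p⟫ = 0} ∩ K) := by
  obtain ⟨d, hd, hfix⟩ := h.exists_direction_smul_add_eq_self hK hsec hspan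
  refine ⟨d, hd, fun u hu hud => ?_⟩
  obtain ⟨r, hr, t, heq⟩ := hsec u (by rintro rfl; simp at hud)
  have ht : t = X - r • X := eq_sub_of_add_eq' (hfix u hu hud r hr t heq)
  exact ⟨r, hr, heq.trans (image_congr fun p _ => by rw [homothety_apply_eq_smul_add, ht])⟩

end IsTouchingPoint

lemma span_inter_eq_image_homothety {K G : Set E} {u X : E} (hu : ⟪u, X⟫ = 0) {r : ℝ}
    (hr : r ≠ 0)
    (heq : {p | ⟪u, p⟫ = 0} ∩ G = AffineMap.homothety X r '' ({p | ⟪u, p⟫ = 0} ∩ K)) :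
    (Submodule.span ℝ {X} : Set E) ∩ G =
      AffineMap.homothety X r '' ((Submodule.span ℝ {X} : Set E) ∩ K) := by
  set L := Submodule.span ℝ {X}
  have hXL : X ∈ L := Submodule.mem_span_singleton_self X
  have hL (S : Set E) : (L : Set E) ∩ ({p | ⟪u, p⟫ = 0} ∩ S) = (L : Set E) ∩ S := by
    have hsub : (L : Set E) ⊆ {p | ⟪u, p⟫ = 0} := by
      intro p hp
      obtain ⟨a, rfl⟩ := Submodule.mem_span_singleton.1 hp
      simp [inner_smul_right, hu]
    rw [← inter_assoc, inter_eq_left.2 hsub]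
  have hpre : AffineMap.homothety X r ⁻¹' (L : Set E) = L := by
    ext p
    rw [mem_preimage, AffineMap.homothety_apply, vadd_eq_add, vsub_eq_sub, SetLike.mem_coe,
      SetLike.mem_coe, L.add_mem_iff_left hXL, L.smul_mem_iff hr, L.sub_mem_iff_left hXL]
  rw [← hL G, heq, ← image_preimage_inter, hpre, hL K]

/- Both sections contain the line through `X`; the diameters on that line determine the ratio. -/
lemma homothety_ratio_unique {K G : Set E} (hK : IsBounded K) (h0 : 0 ∈ K) {u v X : E}
    (hXK : X ∈ K) (hX : X ≠ 0) (hu : ⟪u, X⟫ = 0) (hv : ⟪v, X⟫ = 0) {r s : ℝ} (hr : 0 < r)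
    (hs : 0 < s)
    (hur : {p | ⟪u, p⟫ = 0} ∩ G = AffineMap.homothety X r '' ({p | ⟪u, p⟫ = 0} ∩ K))
    (hvs : {p | ⟪v, p⟫ = 0} ∩ G = AffineMap.homothety X s '' ({p | ⟪v, p⟫ = 0} ∩ K)) :
    r = s := by
  have hpos : 0 < diam ((Submodule.span ℝ {X} : Set E) ∩ K) :=
    diam_pos ⟨X, ⟨Submodule.mem_span_singleton_self X, hXK⟩, 0, ⟨Submodule.zero_mem _, h0⟩, hX⟩
      (hK.subset inter_subset_right)
  have hline := (span_inter_eq_image_homothety hu hr.ne' hur).symm.trans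
    (span_inter_eq_image_homothety hv hs.ne' hvs)
  have hdiam := congrArg diam hline
  rw [diam_image_homothety, diam_image_homothety, abs_of_pos hr, abs_of_pos hs] at hdiam
  exact mul_right_cancel₀ hpos.ne' hdiam

variable [FiniteDimensional ℝ E]

lemma exists_orthogonal_pair_of_notMem_span {X d p : E} (hd : d ∉ Submodule.span ℝ {X})
    (hp : p ∉ Submodule.span ℝ {X, d}) : ∃ u : E, ⟪u, X⟫ = 0 ∧ ⟪u, p⟫ = 0 ∧ ⟪u, d⟫ ≠ 0 := by
  refine exists_inner_ne_zero_of_notMem_span_pair fun hmem => hp ?_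
  rw [pair_comm] at hmem ⊢
  exact mem_span_insert_exchange hmem hd

lemma eq_image_homothety_of_sections {K G : Set E} (hKcpt : IsCompact K) (hGcpt : IsCompact G)
    (hK : Convex ℝ K) (hG : Convex ℝ G) (hKint : (interior K).Nonempty)
    (hGint : (interior G).Nonempty) {X d : E} {r : ℝ} (hd : d ∉ Submodule.span ℝ {X})
    (hspan : Submodule.span ℝ {X, d} ≠ ⊤)
    (hsec : ∀ u : E, ⟪u, X⟫ = 0 → ⟪u, d⟫ ≠ 0 →
      {p | ⟪u, p⟫ = 0} ∩ G = AffineMap.homothety X r '' ({p | ⟪u, p⟫ = 0} ∩ K)) :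
    G = AffineMap.homothety X r '' K := by
  have hcont : Continuous (AffineMap.homothety X r) := AffineMap.homothety_continuous X r
  apply Subset.antisymm
  · refine subset_of_diff_submodule_subset hG hGint hspan (hKcpt.image hcont).isClosed ?_
    rintro p ⟨hpG, hp⟩
    obtain ⟨u, huX, hup, hud⟩ := exists_orthogonal_pair_of_notMem_span hd hp
    exact image_mono inter_subset_right ((hsec u huX hud).subset ⟨hup, hpG⟩)
  · rw [image_subset_iff]
    refine subset_of_diff_submodule_subset hK hKint hspan (hGcpt.isClosed.preimage hcont) ?_
    rintro p ⟨hpK, hp⟩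
    obtain ⟨u, huX, hup, hud⟩ := exists_orthogonal_pair_of_notMem_span hd hp
    exact ((hsec u huX hud).superset (mem_image_of_mem _ ⟨hup, hpK⟩)).2

lemma IsTouchingPoint.isHomothetic (hdim : 3 ≤ Module.finrank ℝ E) {K G : Set E} {e w X : E}
    (h : IsTouchingPoint K G e w X) (hKcpt : IsCompact K) (hGcpt : IsCompact G)
    (hK : Convex ℝ K) (hG : Convex ℝ G) (hK0 : 0 ∈ interior K) (hGint : (interior G).Nonempty)
    (hsec : HasHomotheticSections K G) : IsHomothetic K G := by
  obtain ⟨d, hd, hhom⟩ := h.exists_direction_homothety hK hsec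
    (by rw [← pair_eq_singleton]; exact span_pair_ne_top hdim X X)
  obtain ⟨u₀, hu₀, -, hu₀d⟩ :=
    exists_inner_ne_zero_of_notMem_span_pair (p := X) (by rwa [pair_eq_singleton])
  obtain ⟨r, hr, heq₀⟩ := hhom u₀ hu₀ hu₀d
  have hGK : G = AffineMap.homothety X r '' K := by
    refine eq_image_homothety_of_sections hKcpt hGcpt hK hG ⟨0, hK0⟩ hGint hd
      (span_pair_ne_top hdim X d) fun u hu hud => ?_
    obtain ⟨s, hs, heq⟩ := hhom u hu hud
    rwa [homothety_ratio_unique hKcpt.isBounded (interior_subset hK0) (h.subset h.mem)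
      h.ne_zero hu₀ hu hr hs heq₀ heq]
  exact hGK ▸ isHomothetic_image_homothety K X hr

lemma HasHomotheticSections.isHomothetic (hdim : 3 ≤ Module.finrank ℝ E) {K G : Set E}
    (hsec : HasHomotheticSections K G) (hKcpt : IsCompact K) (hGcpt : IsCompact G)
    (hK : Convex ℝ K) (hG : Convex ℝ G) (hK0 : 0 ∈ interior K) (hG0 : 0 ∈ interior G) :
    IsHomothetic K G := by
  have : Nontrivial E := Module.nontrivial_of_finrank_pos (R := ℝ) (by lia)
  obtain ⟨N, hN, hsub, X₀, hX₀G, hX₀⟩ :=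
    exists_smul_superset_touching hKcpt hGcpt hK hK0 hG0
  have hNK0 : 0 ∈ interior (N • K) := by
    rw [interior_smul₀ hN.ne']
    exact ⟨0, hK0, smul_zero N⟩
  obtain ⟨e, w, X, h⟩ := exists_isTouchingPoint (hK.smul N) hNK0 hGcpt hsub hX₀G hX₀
  exact (isHomothetic_smul_set K hN).trans <| h.isHomothetic hdim (hKcpt.smul N) hGcpt
    (hK.smul N) hG hNK0 ⟨0, hG0⟩ (hsec.smul_left hN)

theorem stmt15_general (hdim : 3 ≤ Module.finrank ℝ E) {K G : Set E} (hKcpt : IsCompact K)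
    (hGcpt : IsCompact G) (hK : Convex ℝ K) (hG : Convex ℝ G) {O : E} (hOK : O ∈ interior K)
    (hOG : O ∈ interior G)
    (hsec : ∀ u : E, u ≠ 0 →
      IsHomothetic ({p | ⟪u, p - O⟫ = 0} ∩ K) ({p | ⟪u, p - O⟫ = 0} ∩ G)) :
    IsHomothetic K G := by
  have hzero {S : Set E} (hS : O ∈ interior S) : 0 ∈ interior (-O +ᵥ S) := by
    rw [interior_vadd]
    exact ⟨O, hS, neg_add_cancel O⟩
  have hsec' : HasHomotheticSections (-O +ᵥ K) (-O +ᵥ G) := by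
    intro u hu
    rw [hyperplane_inter_neg_vadd_set, hyperplane_inter_neg_vadd_set]
    exact (isHomothetic_vadd_set _ _).symm.trans
      ((hsec u hu).trans (isHomothetic_vadd_set _ _))
  have htranslates : IsHomothetic (-O +ᵥ K) (-O +ᵥ G) :=
    hsec'.isHomothetic hdim (hKcpt.vadd (-O)) (hGcpt.vadd (-O)) (hK.vadd (-O)) (hG.vadd (-O))
      (hzero hOK) (hzero hOG)
  exact (isHomothetic_vadd_set K (-O)).trans
    (htranslates.trans (isHomothetic_vadd_set G (-O)).symm)

end InnerProduct

/-- Rogers' theorem: if all sections of `K` and `G` by hyperplanes through a common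
interior point `O` are homothetic, then `K` and `G` are homothetic. -/
theorem stmt15 {n : ℕ} (hn : 3 ≤ n) (K G : Set (EuclideanSpace ℝ (Fin n)))
    (hK : IsConvexBody K) (hG : IsConvexBody G)
    (O : EuclideanSpace ℝ (Fin n)) (hOK : O ∈ interior K) (hOG : O ∈ interior G)
    (hsec : ∀ u : EuclideanSpace ℝ (Fin n), u ≠ 0 →
      ∃ lam : ℝ, 0 < lam ∧ ∃ t : EuclideanSpace ℝ (Fin n),
        {p | ⟪u, p - O⟫ = 0} ∩ G = (fun p => lam • p + t) '' ({p | ⟪u, p - O⟫ = 0} ∩ K)) :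
    ∃ lam : ℝ, 0 < lam ∧ ∃ t : EuclideanSpace ℝ (Fin n),
      G = (fun p => lam • p + t) '' K :=
  stmt15_general (by simpa using hn) hK.1 hG.1 hK.2.1 hG.2.1 hOK hOG hsec
end
end
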